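/- arXiv:1901.09453 — 3 statements merged into one kernel-verified Lean document; each statement's English description precedes it below -/
import Mathlib

section
/- Let X be a measurable space, D_S a probability measure on X, f_S : X → [0,1] a measurable labeling function, and H a countable nonempty set of measurable functions from X to [0,1]. Fix n ≥ 1 and δ ∈ (0,1). Then with probability at least 1 − δ over an i.i.d. sample S = (x_1, …, x_n) drawn from D_S^n, the following holds simultaneously for all h ∈ H: E_{x∼D_S}[|h(x) − f_S(x)|] ≤ (1/n)·Σ_{i=1}^n |h(x_i) − f_S(x_i)| + 2·Rad_S(H) + 3·√(log(2/δ)/(2n)). -/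
open MeasureTheory Set

/-- The empirical Rademacher complexity of the class `H` w.r.t. the sample `x`:
the expectation, over i.i.d. uniform signs `σ ∈ {−1,+1}^n`, of
`sup_{h ∈ H} (1/n) ∑ i σ_i h(x_i)`.  The expectation is written as the average
over all `2^n` sign vectors (encoded as `Fin n → Bool`). -/
noncomputable def radS {X : Type*} {n : ℕ} (x : Fin n → X) (H : Set (X → ℝ)) : ℝ :=
  (∑ σ : Fin n → Bool,
    sSup ((fun h => (1 / (n : ℝ)) * ∑ i, (if σ i then (1 : ℝ) else -1) * h (x i)) '' H))
    / 2 ^ n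

/-!
Let `Φ x` be the largest deviation of a sum of losses over the sample `x` from its mean, and let
`R x` be the unnormalized Rademacher average of the hypotheses on `x`. Exchanging coordinates
between `x` and an independent ghost sample does not change the joint law, so random signs can be
inserted, giving `𝔼 Φ ≤ 2 𝔼 R'` with `R'` the Rademacher average of the losses. The losses are
`1`-Lipschitz in the hypothesis, hence `R' ≤ R` by contraction: averaging over the sign of a single
coordinate, only differences of the values at that coordinate matter.

Both `Φ` and `R` change by at most `1` when one sample point changes, so `Φ - 2 R` has bounded
differences `3` and nonpositive mean. A single application of McDiarmid's inequality to `Φ - 2 R`,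
instead of one to `Φ` and one to `R`, yields the factor `3` and avoids the union bound, so that
`log (1 / δ)` suffices in place of `log (2 / δ)`.
-/

open ProbabilityTheory
open scoped BigOperators NNReal

section BoundedDifferences

variable {ι : Type*} {X : ι → Type*}

/-- The bounded differences property of McDiarmid's inequality: changing only the coordinate `i` of
the argument changes `f` by at most `c i`. One inequality suffices, as `x` and `y` can be
swapped. -/
def HasBoundedDifferences (f : (∀ i, X i) → ℝ) (c : ι → ℝ) : Prop :=
  ∀ i x y, (∀ j, j ≠ i → x j = y j) → f x ≤ f y + c i

theorem hasBoundedDifferences_sum [Fintype ι] {g : ∀ i, X i → ℝ} {c : ι → ℝ}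
    (hg : ∀ i a b, g i a ≤ g i b + c i) :
    HasBoundedDifferences (fun x : ∀ i, X i ↦ ∑ i, g i (x i)) c := by
  classical
  intro i x y hxy
  have hrest : ∑ j ∈ Finset.univ.erase i, g j (x j) = ∑ j ∈ Finset.univ.erase i, g j (y j) :=
    Finset.sum_congr rfl fun j hj ↦ by rw [hxy j (Finset.ne_of_mem_erase hj)]
  simp only [← Finset.add_sum_erase _ _ (Finset.mem_univ i), hrest]
  linarith [hg i (x i) (y i)]

namespace HasBoundedDifferences

variable {f g : (∀ i, X i) → ℝ} {c d : ι → ℝ}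

theorem sub (hf : HasBoundedDifferences f c) (hg : HasBoundedDifferences g d) :
    HasBoundedDifferences (fun x ↦ f x - g x) (fun i ↦ c i + d i) := fun i x y hxy ↦ by
  linarith [hf i x y hxy, hg i y x fun j hj ↦ (hxy j hj).symm]

theorem const_mul (hf : HasBoundedDifferences f c) {r : ℝ} (hr : 0 ≤ r) :
    HasBoundedDifferences (fun x ↦ r * f x) (fun i ↦ r * c i) := fun i x y hxy ↦ by
  simpa only [mul_add] using mul_le_mul_of_nonneg_left (hf i x y hxy) hr

theorem ciSup {κ : Type*} [Nonempty κ] {F : κ → (∀ i, X i) → ℝ}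
    (hF : ∀ k, HasBoundedDifferences (F k) c) (hbdd : ∀ x, BddAbove (range fun k ↦ F k x)) :
    HasBoundedDifferences (fun x ↦ ⨆ k, F k x) c := fun i x y hxy ↦
  ciSup_le fun k ↦ (hF k i x y hxy).trans (by gcongr; exact le_ciSup (hbdd y) k)

theorem expect {κ : Type*} [Fintype κ] [Nonempty κ] {F : κ → (∀ i, X i) → ℝ}
    (hF : ∀ k, HasBoundedDifferences (F k) c) :
    HasBoundedDifferences (fun x ↦ 𝔼 k, F k x) c := fun i x y hxy ↦
  (Finset.expect_le_expect fun k _ ↦ hF k i x y hxy).trans_eq <| by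
    rw [Finset.expect_add_distrib, Fintype.expect_const]

theorem le_add_sum [Fintype ι] (hf : HasBoundedDifferences f c) (x y : ∀ i, X i) :
    f x ≤ f y + ∑ i, c i := by
  classical
  suffices ∀ s : Finset ι, f (s.piecewise x y) ≤ f y + ∑ i ∈ s, c i by
    simpa only [Finset.piecewise_univ] using this Finset.univ
  intro s
  induction s using Finset.induction_on with
  | empty => simp
  | insert i s hi ih =>
    have hstep : f ((insert i s).piecewise x y) ≤ f (s.piecewise x y) + c i :=
      hf i _ _ fun j hj ↦ by simp [Finset.piecewise, hj]
    rw [Finset.sum_insert hi]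
    linarith

theorem exists_forall_mem_Icc [Finite ι] (hf : HasBoundedDifferences f c) :
    ∃ a b, ∀ x, f x ∈ Icc a b := by
  cases nonempty_fintype ι
  rcases isEmpty_or_nonempty (∀ i, X i) with _ | ⟨⟨y⟩⟩
  · exact ⟨0, 0, fun x ↦ isEmptyElim x⟩
  · exact ⟨f y - ∑ i, c i, f y + ∑ i, c i, fun x ↦
      ⟨by linarith [hf.le_add_sum y x], hf.le_add_sum x y⟩⟩

variable [Fintype ι] [∀ i, MeasurableSpace (X i)] {μ : ∀ i, Measure (X i)}
  [∀ i, IsProbabilityMeasure (μ i)]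

theorem integrable (hf : HasBoundedDifferences f c) (hfm : Measurable f) :
    Integrable f (Measure.pi μ) := by
  obtain ⟨a, b, hab⟩ := hf.exists_forall_mem_Icc
  exact .of_mem_Icc a b hfm.aemeasurable (.of_forall hab)

theorem integrable_exp_mul (hf : HasBoundedDifferences f c) (hfm : Measurable f) (t : ℝ) :
    Integrable (fun x ↦ Real.exp (t * f x)) (Measure.pi μ) := by
  obtain ⟨a, b, hab⟩ := hf.exists_forall_mem_Icc
  exact integrable_exp_mul_of_mem_Icc hfm.aemeasurable (.of_forall hab)

end HasBoundedDifferences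

end BoundedDifferences

section McDiarmid

variable {α β : Type*} [MeasurableSpace α] [MeasurableSpace β] {μ : Measure α} {ν : Measure β}

theorem hasSubgaussianMGF_of_comp_measurePreserving {T : α → β} (hT : MeasurePreserving T μ ν)
    {f : β → ℝ} (hf : AEMeasurable f ν) {c : ℝ≥0} (h : HasSubgaussianMGF (f ∘ T) c μ) :
    HasSubgaussianMGF f c ν := by
  rw [← hT.map_eq] at hf ⊢
  refine h.congr_identDistrib ⟨hf.comp_measurable hT.measurable, hf, ?_⟩
  rw [AEMeasurable.map_map_of_aemeasurable hf hT.measurable.aemeasurable]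

theorem hasSubgaussianMGF_sub_integral_of_forall_le_add [IsProbabilityMeasure μ] {f : α → ℝ}
    (hf : AEMeasurable f μ) {c : ℝ≥0} (hc : ∀ x y, f x ≤ f y + c) :
    HasSubgaussianMGF (fun x ↦ f x - ∫ y, f y ∂μ) ((c / 2) ^ 2) μ := by
  obtain ⟨x₀⟩ := nonempty_of_isProbabilityMeasure μ
  have hbdd : BddBelow (range f) :=
    ⟨f x₀ - c, forall_mem_range.2 fun x ↦ by linarith [hc x₀ x]⟩
  have hmem (x : α) : f x ∈ Icc (⨅ y, f y) ((⨅ y, f y) + c) := by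
    have : Nonempty α := ⟨x₀⟩
    refine ⟨ciInf_le hbdd x, sub_le_iff_le_add.1 (le_ciInf fun y ↦ ?_)⟩
    linarith [hc x y]
  simpa using hasSubgaussianMGF_of_mem_Icc hf (.of_forall hmem)

theorem hasSubgaussianMGF_prod [SFinite μ] [SFinite ν] {f : α × β → ℝ} {g : α → ℝ} {c d : ℝ≥0}
    (hf : ∀ t, Integrable (fun p ↦ Real.exp (t * f p)) (μ.prod ν)) (hg : HasSubgaussianMGF g c μ)
    (hfg : ∀ x, HasSubgaussianMGF (fun y ↦ f (x, y) - g x) d ν) :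
    HasSubgaussianMGF f (c + d) (μ.prod ν) := by
  refine ⟨hf, fun t ↦ ?_⟩
  have hfiber (x : α) : ∫ y, Real.exp (t * f (x, y)) ∂ν ≤
      Real.exp (t * g x) * Real.exp (d * t ^ 2 / 2) := by
    have hsplit (y : β) : Real.exp (t * f (x, y)) =
        Real.exp (t * g x) * Real.exp (t * (f (x, y) - g x)) := by
      rw [← Real.exp_add]; ring_nf
    simp only [hsplit, integral_const_mul]
    gcongr
    exact (hfg x).mgf_le t
  calc mgf f (μ.prod ν) t = ∫ x, ∫ y, Real.exp (t * f (x, y)) ∂ν ∂μ := integral_prod _ (hf t)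
    _ ≤ ∫ x, Real.exp (t * g x) * Real.exp (d * t ^ 2 / 2) ∂μ :=
      integral_mono (hf t).integral_prod_left ((hg.integrable_exp_mul t).mul_const _) hfiber
    _ = mgf g μ t * Real.exp (d * t ^ 2 / 2) := integral_mul_const _ _
    _ ≤ Real.exp (c * t ^ 2 / 2) * Real.exp (d * t ^ 2 / 2) := by
      gcongr
      exact hg.mgf_le t
    _ = Real.exp ((c + d : ℝ≥0) * t ^ 2 / 2) := by
      rw [← Real.exp_add]; push_cast; ring_nf

namespace HasBoundedDifferences

theorem integral {ι κ : Type*} {X : ι → Type*} [MeasurableSpace κ] {ρ : Measure κ}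
    [IsProbabilityMeasure ρ] {c : ι → ℝ} {F : κ → (∀ i, X i) → ℝ}
    (hF : ∀ k, HasBoundedDifferences (F k) c) (hint : ∀ x, Integrable (fun k ↦ F k x) ρ) :
    HasBoundedDifferences (fun x ↦ ∫ k, F k x ∂ρ) c := fun i x y hxy ↦ by
  calc ∫ k, F k x ∂ρ ≤ ∫ k, (F k y + c i) ∂ρ :=
        integral_mono (hint x) ((hint y).add (integrable_const _)) fun k ↦ hF k i x y hxy
    _ = (∫ k, F k y ∂ρ) + c i := by
        rw [integral_add (hint y) (integrable_const _), integral_const, probReal_univ, one_smul]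

theorem comp_piCongrLeft {ι κ : Type*} {X : κ → Type*} [∀ i, MeasurableSpace (X i)] {c : κ → ℝ}
    {f : (∀ i, X i) → ℝ} (hf : HasBoundedDifferences f c) (e : ι ≃ κ) :
    HasBoundedDifferences (f ∘ MeasurableEquiv.piCongrLeft X e) fun i ↦ c (e i) := by
  intro i x y hxy
  refine hf (e i) _ _ fun j hj ↦ ?_
  obtain ⟨j, rfl⟩ := e.surjective j
  simpa only [MeasurableEquiv.coe_piCongrLeft, Equiv.piCongrLeft_apply_apply] using
    hxy j fun h ↦ hj (congrArg e h)

theorem hasSubgaussianMGF_option {ι : Type*} [Fintype ι] {X : Option ι → Type*}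
    [∀ i, MeasurableSpace (X i)] {μ : ∀ i, Measure (X i)} [∀ i, IsProbabilityMeasure (μ i)]
    {c : Option ι → ℝ≥0}
    (ih : ∀ g : (∀ i, X (some i)) → ℝ, HasBoundedDifferences g (fun i ↦ c (some i)) →
      Measurable g → HasSubgaussianMGF (fun x ↦ g x - ∫ y, g y ∂.pi fun i ↦ μ (some i))
        (∑ i, (c (some i) / 2) ^ 2) (.pi fun i ↦ μ (some i)))
    {f : (∀ i, X i) → ℝ} (hf : HasBoundedDifferences f fun i ↦ c i) (hfm : Measurable f) :
    HasSubgaussianMGF (fun x ↦ f x - ∫ y, f y ∂.pi μ) (∑ i, (c i / 2) ^ 2) (.pi μ) := by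
  let e := (MeasurableEquiv.piOptionEquivProd X).symm
  have he : MeasurePreserving e ((Measure.pi fun i ↦ μ (some i)).prod (μ none)) (.pi μ) :=
    ⟨e.measurable, Measure.pi_map_piOptionEquivProd μ⟩
  have hexp (t : ℝ) : Integrable (fun p ↦ Real.exp (t * (f (e p) - ∫ y, f y ∂.pi μ)))
      ((Measure.pi fun i ↦ μ (some i)).prod (μ none)) := by
    refine he.integrable_comp_of_integrable
      (g := fun x ↦ Real.exp (t * (f x - ∫ y, f y ∂.pi μ))) ?_
    simpa only [mul_sub, Real.exp_sub] using (hf.integrable_exp_mul hfm t).div_const _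
  have hsome (y : X none) : HasBoundedDifferences (fun x ↦ f (e (x, y))) fun i ↦ c (some i) :=
    fun i x x' hx ↦ hf (some i) _ _ <| Option.rec (fun _ ↦ rfl) fun j hj ↦
      hx j fun h ↦ hj (congrArg some h)
  have hnone (x : ∀ i, X (some i)) (y z : X none) : f (e (x, y)) ≤ f (e (x, z)) + c none :=
    hf none _ _ <| Option.rec (fun h ↦ absurd rfl h) fun j _ ↦ rfl
  have hint (x : ∀ i, X (some i)) : Integrable (fun y ↦ f (e (x, y))) (μ none) := by
    obtain ⟨a, b, hab⟩ := hf.exists_forall_mem_Icc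
    exact .of_mem_Icc a b (by fun_prop) (.of_forall fun y ↦ hab _)
  have hmean : ∫ y, f y ∂.pi μ = ∫ x, ∫ y, f (e (x, y)) ∂μ none ∂.pi fun i ↦ μ (some i) := by
    rw [← he.integral_comp e.measurableEmbedding]
    exact integral_prod _ (he.integrable_comp_of_integrable (hf.integrable hfm))
  have hgm : Measurable fun x ↦ ∫ y, f (e (x, y)) ∂μ none :=
    (StronglyMeasurable.integral_prod_right (f := fun x y ↦ f (e (x, y)))
      (hfm.comp e.measurable).stronglyMeasurable).measurable
  refine hasSubgaussianMGF_of_comp_measurePreserving he (by fun_prop) ?_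
  rw [Fintype.sum_option, add_comm]
  refine hasSubgaussianMGF_prod hexp (ih _ (.integral hsome hint) hgm) fun x ↦ ?_
  simpa only [hmean, Function.comp_apply, sub_sub_sub_cancel_right] using
    hasSubgaussianMGF_sub_integral_of_forall_le_add (hint x).aemeasurable (hnone x)

theorem hasSubgaussianMGF_sub_integral {ι : Type*} [Fintype ι] {X : ι → Type*}
    [∀ i, MeasurableSpace (X i)] {μ : ∀ i, Measure (X i)} [∀ i, IsProbabilityMeasure (μ i)]
    {c : ι → ℝ≥0} {f : (∀ i, X i) → ℝ} (hf : HasBoundedDifferences f fun i ↦ c i)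
    (hfm : Measurable f) :
    HasSubgaussianMGF (fun x ↦ f x - ∫ y, f y ∂.pi μ) (∑ i, (c i / 2) ^ 2) (.pi μ) := by
  revert X c
  refine Fintype.induction_empty_option (P := fun ι _ ↦ ∀ {X : ι → Type _}
    [∀ i, MeasurableSpace (X i)] {μ : ∀ i, Measure (X i)} [∀ i, IsProbabilityMeasure (μ i)]
    {c : ι → ℝ≥0} {f : (∀ i, X i) → ℝ}, (HasBoundedDifferences f fun i ↦ c i) → Measurable f →
      HasSubgaussianMGF (fun x ↦ f x - ∫ y, f y ∂.pi μ) (∑ i, (c i / 2) ^ 2) (.pi μ))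
    (fun ι κ _ e ih X _ μ _ c f hf hfm ↦ ?of_equiv) (fun {X} _ μ _ c f _ _ ↦ ?empty)
    (fun ι _ ih X _ μ _ c f hf hfm ↦ hasSubgaussianMGF_option (fun g hg hgm ↦ ih hg hgm) hf hfm) ι
  case empty =>
    have hzero : (fun x ↦ f x - ∫ y, f y ∂.pi μ) = fun _ ↦ 0 := by
      ext x
      simp [integral_unique, Subsingleton.elim x default]
    simp only [hzero, Finset.univ_eq_empty, Finset.sum_empty, HasSubgaussianMGF.fun_zero]
  case of_equiv =>
    let : Fintype ι := .ofEquiv κ e.symm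
    have he := measurePreserving_piCongrLeft μ e
    refine hasSubgaussianMGF_of_comp_measurePreserving he (by fun_prop) ?_
    simpa only [Function.comp_def, he.integral_comp', ← e.sum_comp] using
      ih (μ := fun i ↦ μ (e i)) (hf.comp_piCongrLeft e) (by fun_prop)

end HasBoundedDifferences

end McDiarmid

section Rademacher

variable {ι κ : Type*} [Fintype ι]

/-- The value in `{-1, 1}` of a Rademacher sign encoded as a Boolean. -/
def rademacherSign (b : Bool) : ℝ := if b then 1 else -1

@[simp] theorem rademacherSign_true : rademacherSign true = 1 := rfl

@[simp] theorem rademacherSign_false : rademacherSign false = -1 := rfl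

@[simp] theorem abs_rademacherSign (b : Bool) : |rademacherSign b| = 1 := by
  cases b <;> simp

@[simp] theorem rademacherSign_not (b : Bool) : rademacherSign (!b) = -rademacherSign b := by
  cases b <;> simp

/-- The largest correlation of the sign vector `σ` with a vector of the family `v`. It has the junk
value `0` when the correlations are unbounded. -/
noncomputable def signedSup (v : κ → ι → ℝ) (σ : ι → Bool) : ℝ :=
  ⨆ k, ∑ i, rademacherSign (σ i) * v k i

theorem abs_sum_rademacherSign_mul_le {u : ι → ℝ} {C : ℝ} (hu : ∀ i, |u i| ≤ C) (σ : ι → Bool) :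
    |∑ i, rademacherSign (σ i) * u i| ≤ Fintype.card ι * C := by
  calc |∑ i, rademacherSign (σ i) * u i| ≤ ∑ i, |rademacherSign (σ i) * u i| :=
        Finset.abs_sum_le_sum_abs _ _
    _ ≤ ∑ _i : ι, C := Finset.sum_le_sum fun i _ ↦ by simpa [abs_mul] using hu i
    _ = Fintype.card ι * C := by simp

theorem bddAbove_range_sum_rademacherSign_mul {v : κ → ι → ℝ} {C : ℝ} (hv : ∀ k i, |v k i| ≤ C)
    (σ : ι → Bool) : BddAbove (range fun k ↦ ∑ i, rademacherSign (σ i) * v k i) :=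
  ⟨Fintype.card ι * C, forall_mem_range.2 fun k ↦
    (le_abs_self _).trans (abs_sum_rademacherSign_mul_le (hv k) σ)⟩

theorem sum_rademacherSign_mul_le_signedSup {v : κ → ι → ℝ} {C : ℝ} (hv : ∀ k i, |v k i| ≤ C)
    (σ : ι → Bool) (k : κ) : ∑ i, rademacherSign (σ i) * v k i ≤ signedSup v σ :=
  le_ciSup (bddAbove_range_sum_rademacherSign_mul hv σ) k

theorem abs_signedSup_le [Nonempty κ] {v : κ → ι → ℝ} {C : ℝ} (hv : ∀ k i, |v k i| ≤ C)
    (σ : ι → Bool) : |signedSup v σ| ≤ Fintype.card ι * C := by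
  have hcorr (k : κ) := abs_le.1 (abs_sum_rademacherSign_mul_le (hv k) σ)
  obtain ⟨k⟩ := ‹Nonempty κ›
  exact abs_le.2 ⟨(hcorr k).1.trans (sum_rademacherSign_mul_le_signedSup hv σ k),
    have : Nonempty κ := ⟨k⟩; ciSup_le fun l ↦ (hcorr l).2⟩

theorem signedSup_sub_le [Nonempty κ] {v w : κ → ι → ℝ} {C : ℝ} (hv : ∀ k i, |v k i| ≤ C)
    (hw : ∀ k i, |w k i| ≤ C) (σ : ι → Bool) :
    signedSup (fun k i ↦ v k i - w k i) σ ≤ signedSup v σ + signedSup w fun i ↦ !(σ i) := by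
  refine ciSup_le fun k ↦ ?_
  have h := sum_rademacherSign_mul_le_signedSup hw (fun i ↦ !(σ i)) k
  simp only [rademacherSign_not, neg_mul, Finset.sum_neg_distrib] at h
  simp only [mul_sub, Finset.sum_sub_distrib]
  linarith [sum_rademacherSign_mul_le_signedSup hv σ k]

theorem measurable_signedSup [Countable κ] {α : Type*} [MeasurableSpace α] {v : α → κ → ι → ℝ}
    (hv : ∀ k i, Measurable fun a ↦ v a k i) (σ : ι → Bool) :
    Measurable fun a ↦ signedSup (v a) σ :=
  .iSup fun k ↦ by fun_prop

theorem integrable_signedSup [Countable κ] [Nonempty κ] {α : Type*} [MeasurableSpace α]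
    {ρ : Measure α} [IsFiniteMeasure ρ] {v : α → κ → ι → ℝ} {C : ℝ}
    (hv : ∀ k i, Measurable fun a ↦ v a k i) (hvC : ∀ a k i, |v a k i| ≤ C) (σ : ι → Bool) :
    Integrable (fun a ↦ signedSup (v a) σ) ρ :=
  .of_bound (measurable_signedSup hv σ).aestronglyMeasurable (Fintype.card ι * C) <|
    .of_forall fun a ↦ abs_signedSup_le (hvC a) σ

variable [DecidableEq ι]

/-- The unnormalized Rademacher average of a family of vectors: the expectation of `signedSup` over
uniform signs. Dividing by `card ι` gives the Rademacher complexity of the family. -/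
noncomputable def rademacherAverage (v : κ → ι → ℝ) : ℝ := 𝔼 σ : ι → Bool, signedSup v σ

theorem expect_comp_not (F : (ι → Bool) → ℝ) : 𝔼 σ : ι → Bool, F (fun i ↦ !(σ i)) = 𝔼 σ, F σ :=
  Fintype.expect_equiv (Equiv.piCongrRight fun _ ↦ Equiv.boolNot) _ _ fun _ ↦ rfl

theorem sum_rademacherSign_mul_update (u : ι → ℝ) (σ : ι → Bool) (i : ι)
    (b : Bool) : ∑ j, rademacherSign (Function.update σ i b j) * u j =
      rademacherSign b * u i + ∑ j ∈ Finset.univ.erase i, rademacherSign (σ j) * u j := by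
  rw [← Finset.add_sum_erase _ _ (Finset.mem_univ i), Function.update_self]
  congr 1
  exact Finset.sum_congr rfl fun j hj ↦ by rw [Function.update_of_ne (Finset.ne_of_mem_erase hj)]

theorem signedSup_update_add_signedSup_update_le [Nonempty κ] {v w : κ → ι → ℝ}
    {C : ℝ} (hv : ∀ k i, |v k i| ≤ C) {i : ι} (heq : ∀ k j, j ≠ i → w k j = v k j)
    (hle : ∀ k l, |w k i - w l i| ≤ |v k i - v l i|) (σ : ι → Bool) :
    signedSup w (Function.update σ i true) + signedSup w (Function.update σ i false) ≤
      signedSup v (Function.update σ i true) + signedSup v (Function.update σ i false) := by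
  have hrest (k : κ) : ∑ j ∈ Finset.univ.erase i, rademacherSign (σ j) * w k j =
      ∑ j ∈ Finset.univ.erase i, rademacherSign (σ j) * v k j :=
    Finset.sum_congr rfl fun j hj ↦ by rw [heq k j (Finset.ne_of_mem_erase hj)]
  -- If `v k i < v l i`, the competitors for `v` are `l` at the sign `1` and `k` at the sign `-1`.
  refine ciSup_add_ciSup_le fun k l ↦ ?_
  have hlower (b : Bool) (m : κ) :=
    sum_rademacherSign_mul_le_signedSup hv (Function.update σ i b) m
  simp only [sum_rademacherSign_mul_update, hrest] at hlower ⊢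
  have htrue := hlower true
  have hfalse := hlower false
  simp only [rademacherSign_true, rademacherSign_false] at htrue hfalse ⊢
  rcases abs_cases (v k i - v l i) with h | h <;>
    linarith [le_abs_self (w k i - w l i), hle k l, htrue k, htrue l, hfalse k, hfalse l]

theorem expect_update_add_update (F : (ι → Bool) → ℝ) (i : ι) :
    𝔼 σ, (F (Function.update σ i true) + F (Function.update σ i false)) = 2 * 𝔼 σ, F σ := by
  have hflip : 𝔼 σ, F (Function.update σ i !(σ i)) = 𝔼 σ, F σ := by
    refine Fintype.expect_equiv (Function.Involutive.toPerm
      (fun σ : ι → Bool ↦ Function.update σ i !(σ i)) fun σ ↦ by simp) _ _ fun _ ↦ rfl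
  rw [two_mul]
  nth_rewrite 2 [← hflip]
  rw [← Finset.expect_add_distrib]
  refine Finset.expect_congr rfl fun σ _ ↦ ?_
  have hself := Function.update_eq_self i σ
  cases hσ : σ i <;> rw [hσ] at hself <;> simp [hself, add_comm]

theorem rademacherAverage_le_of_eq_off [Nonempty κ] {v w : κ → ι → ℝ} {C : ℝ}
    (hv : ∀ k i, |v k i| ≤ C) {i : ι} (heq : ∀ k j, j ≠ i → w k j = v k j)
    (hle : ∀ k l, |w k i - w l i| ≤ |v k i - v l i|) :
    rademacherAverage w ≤ rademacherAverage v := by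
  have h := Finset.expect_le_expect (s := Finset.univ) fun σ _ ↦
    signedSup_update_add_signedSup_update_le hv heq hle σ
  rw [expect_update_add_update, expect_update_add_update] at h
  exact le_of_mul_le_mul_left h two_pos

theorem rademacherAverage_le_of_abs_sub_le [Nonempty κ] {v w : κ → ι → ℝ} {C : ℝ}
    (hv : ∀ k i, |v k i| ≤ C) (hw : ∀ k i, |w k i| ≤ C)
    (hle : ∀ i k l, |w k i - w l i| ≤ |v k i - v l i|) :
    rademacherAverage w ≤ rademacherAverage v := by
  suffices ∀ s : Finset ι,
      rademacherAverage (fun k ↦ s.piecewise (w k) (v k)) ≤ rademacherAverage v by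
    simpa only [Finset.piecewise_univ] using this Finset.univ
  intro s
  induction s using Finset.induction_on with
  | empty => simp
  | insert i s hi ih =>
    refine (rademacherAverage_le_of_eq_off (C := C) (i := i) ?_ ?_ ?_).trans ih
    · intro k j
      by_cases hj : j ∈ s <;> simp [hj, hv, hw]
    · intro k j hj
      simp [Finset.piecewise, hj]
    · intro k l
      simpa [hi] using hle i k l

theorem hasBoundedDifferences_rademacherAverage [Nonempty κ] {X : ι → Type*}
    {f : κ → ∀ i, X i → ℝ} {C : ℝ} (hf : ∀ k i a, |f k i a| ≤ C)
    {c : ι → ℝ} (hc : ∀ k i a b, |f k i a - f k i b| ≤ c i) :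
    HasBoundedDifferences (fun x : ∀ i, X i ↦ rademacherAverage fun k i ↦ f k i (x i)) c := by
  have hsum (σ : ι → Bool) (k : κ) :
      HasBoundedDifferences (fun x : ∀ i, X i ↦ ∑ i, rademacherSign (σ i) * f k i (x i)) c := by
    refine hasBoundedDifferences_sum (g := fun i a ↦ rademacherSign (σ i) * f k i a) fun i a b ↦ ?_
    rw [← sub_le_iff_le_add', ← mul_sub]
    exact (le_abs_self _).trans (by simpa [abs_mul] using hc k i a b)
  exact .expect fun σ ↦ .ciSup (hsum σ) fun x ↦
    bddAbove_range_sum_rademacherSign_mul (fun k i ↦ hf k i (x i)) σ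

theorem measurable_rademacherAverage [Countable κ] {α : Type*} [MeasurableSpace α]
    {v : α → κ → ι → ℝ} (hv : ∀ k i, Measurable fun a ↦ v a k i) :
    Measurable fun a ↦ rademacherAverage (v a) := by
  simp only [rademacherAverage, Fintype.expect_eq_sum_div_card]
  exact (Finset.measurable_fun_sum _ fun σ _ ↦ measurable_signedSup hv σ).div_const _

theorem integrable_rademacherAverage [Countable κ] [Nonempty κ] {α : Type*} [MeasurableSpace α]
    {ρ : Measure α} [IsFiniteMeasure ρ] {v : α → κ → ι → ℝ} {C : ℝ}
    (hv : ∀ k i, Measurable fun a ↦ v a k i) (hvC : ∀ a k i, |v a k i| ≤ C) :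
    Integrable (fun a ↦ rademacherAverage (v a)) ρ := by
  simp only [rademacherAverage, Fintype.expect_eq_sum_div_card]
  exact (integrable_finsetSum _ fun σ _ ↦ integrable_signedSup hv hvC σ).div_const _

theorem integral_rademacherAverage [Countable κ] [Nonempty κ] {α : Type*} [MeasurableSpace α]
    {ρ : Measure α} [IsFiniteMeasure ρ] {v : α → κ → ι → ℝ} {C : ℝ}
    (hv : ∀ k i, Measurable fun a ↦ v a k i) (hvC : ∀ a k i, |v a k i| ≤ C) :
    ∫ a, rademacherAverage (v a) ∂ρ = 𝔼 σ, ∫ a, signedSup (v a) σ ∂ρ := by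
  simp only [rademacherAverage, Fintype.expect_eq_sum_div_card]
  rw [integral_div, integral_finsetSum _ fun σ _ ↦ integrable_signedSup hv hvC σ]

end Rademacher

section Symmetrization

variable {ι κ X : Type*} [Fintype ι]

/-- Exchanges two samples at the coordinates where `σ` is `false`. -/
def swapOff (σ : ι → Bool) (p : (ι → X) × (ι → X)) : (ι → X) × (ι → X) :=
  (fun i ↦ if σ i then p.1 i else p.2 i, fun i ↦ if σ i then p.2 i else p.1 i)

theorem signedSup_swapOff (f : κ → X → ℝ) (σ : ι → Bool) (p : (ι → X) × (ι → X)) :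
    signedSup (fun k i ↦ f k ((swapOff σ p).2 i) - f k ((swapOff σ p).1 i)) (fun _ ↦ true) =
      signedSup (fun k i ↦ f k (p.2 i) - f k (p.1 i)) σ := by
  unfold signedSup
  congr! 3 with k i
  cases h : σ i <;> simp [swapOff, h]

variable [MeasurableSpace X]

/-- The uniform one-sided deviation of sums over the sample `x` from their means, unnormalized.
The coordinates of the sample are allowed to have different laws `μ i`. -/
noncomputable def uniformDeviation (μ : ι → Measure X) (f : κ → X → ℝ) (x : ι → X) : ℝ :=
  ⨆ k, ∑ i, (∫ y, f k y ∂μ i - f k (x i))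

theorem measurable_uniformDeviation [Countable κ] (μ : ι → Measure X) {f : κ → X → ℝ}
    (hf : ∀ k, Measurable (f k)) : Measurable (uniformDeviation μ f) :=
  .iSup fun k ↦ by fun_prop

variable {μ : ι → Measure X} [∀ i, IsProbabilityMeasure (μ i)]

theorem measurePreserving_swapOff (σ : ι → Bool) :
    MeasurePreserving (swapOff σ) ((Measure.pi μ).prod (.pi μ)) ((Measure.pi μ).prod (.pi μ)) := by
  have hE := measurePreserving_arrowProdEquivProdArrow X X ι μ μ
  have hσ (i : ι) : MeasurePreserving (if σ i then id else Prod.swap)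
      ((μ i).prod (μ i)) ((μ i).prod (μ i)) := by
    split
    · exact .id _
    · exact Measure.measurePreserving_swap
  convert (hE.comp (measurePreserving_pi _ _ hσ)).comp hE.symm using 1
  ext p i <;> cases h : σ i <;> simp [swapOff, h, MeasurableEquiv.arrowProdEquivProdArrow,
    Equiv.arrowProdEquivProdArrow]

variable {f : κ → X → ℝ} {C : ℝ} (hf : ∀ k, Measurable (f k)) (hfC : ∀ k x, |f k x| ≤ C)

include hf hfC

theorem uniformDeviation_le_integral_signedSup [Countable κ] [Nonempty κ] (x : ι → X) :
    uniformDeviation μ f x ≤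
      ∫ y, signedSup (fun k i ↦ f k (y i) - f k (x i)) (fun _ ↦ true) ∂.pi μ := by
  have hdiff (y : ι → X) (k : κ) (i : ι) : |f k (y i) - f k (x i)| ≤ C + C :=
    (abs_sub _ _).trans (add_le_add (hfC k _) (hfC k _))
  have hint (k : κ) (i : ι) : Integrable (fun y ↦ f k (y i)) (.pi μ) :=
    .of_bound ((hf k).comp (measurable_pi_apply i)).aestronglyMeasurable C <|
      .of_forall fun y ↦ hfC k (y i)
  have hdiff_int (k : κ) (i : ι) : Integrable (fun y ↦ f k (y i) - f k (x i)) (.pi μ) :=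
    (hint k i).sub (integrable_const _)
  refine ciSup_le fun k ↦ ?_
  calc ∑ i, (∫ y, f k y ∂μ i - f k (x i)) = ∫ y, ∑ i, (f k (y i) - f k (x i)) ∂.pi μ := by
        rw [integral_finsetSum _ fun i _ ↦ hdiff_int k i]
        refine Finset.sum_congr rfl fun i _ ↦ ?_
        rw [integral_sub (hint k i) (integrable_const _), integral_const, probReal_univ, one_smul,
          integral_comp_eval (hf k).aestronglyMeasurable]
    _ ≤ ∫ y, signedSup (fun k i ↦ f k (y i) - f k (x i)) (fun _ ↦ true) ∂.pi μ := by
        refine integral_mono (integrable_finsetSum _ fun i _ ↦ hdiff_int k i)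
          (integrable_signedSup (by fun_prop) hdiff _) fun y ↦ ?_
        simpa using
          sum_rademacherSign_mul_le_signedSup (hdiff y) (fun _ ↦ true) k

theorem integral_signedSup_sub_le [Countable κ] [Nonempty κ] (σ : ι → Bool) :
    ∫ p, signedSup (fun k i ↦ f k (p.2 i) - f k (p.1 i)) (fun _ ↦ true)
        ∂(Measure.pi μ).prod (.pi μ) ≤
      ∫ x, signedSup (fun k i ↦ f k (x i)) σ ∂.pi μ +
        ∫ x, signedSup (fun k i ↦ f k (x i)) (fun i ↦ !(σ i)) ∂.pi μ := by
  have hint (τ : ι → Bool) : Integrable (fun x ↦ signedSup (fun k i ↦ f k (x i)) τ) (.pi μ) :=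
    integrable_signedSup (v := fun (x : ι → X) k i ↦ f k (x i)) (by fun_prop)
      (fun x k i ↦ hfC k (x i)) τ
  have hdiff_meas : Measurable fun p : (ι → X) × (ι → X) ↦
      signedSup (fun k i ↦ f k (p.2 i) - f k (p.1 i)) fun _ ↦ true :=
    measurable_signedSup (by fun_prop) _
  calc ∫ p, signedSup (fun k i ↦ f k (p.2 i) - f k (p.1 i)) (fun _ ↦ true)
        ∂(Measure.pi μ).prod (.pi μ)
      = ∫ p, signedSup (fun k i ↦ f k (p.2 i) - f k (p.1 i)) σ ∂(Measure.pi μ).prod (.pi μ) := by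
        have hswap := measurePreserving_swapOff (μ := μ) σ
        rw [← hswap.map_eq, integral_map hswap.measurable.aemeasurable
          hdiff_meas.aestronglyMeasurable, hswap.map_eq]
        simp only [signedSup_swapOff]
    _ ≤ ∫ p, (signedSup (fun k i ↦ f k (p.2 i)) σ +
          signedSup (fun k i ↦ f k (p.1 i)) fun i ↦ !(σ i)) ∂(Measure.pi μ).prod (.pi μ) := by
        refine integral_mono (integrable_signedSup (C := C + C)
          (v := fun (p : (ι → X) × (ι → X)) k i ↦ f k (p.2 i) - f k (p.1 i)) (by fun_prop)
          (fun p k i ↦ (abs_sub _ _).trans (add_le_add (hfC k _) (hfC k _))) σ)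
          (((hint σ).comp_snd _).add ((hint _).comp_fst _)) fun p ↦
            signedSup_sub_le (fun k i ↦ hfC k _) (fun k i ↦ hfC k _) σ
    _ = ∫ x, signedSup (fun k i ↦ f k (x i)) σ ∂.pi μ +
          ∫ x, signedSup (fun k i ↦ f k (x i)) (fun i ↦ !(σ i)) ∂.pi μ := by
        rw [integral_add ((hint σ).comp_snd _) ((hint _).comp_fst _),
          integral_fun_snd fun x : ι → X ↦ signedSup (fun k i ↦ f k (x i)) σ,
          integral_fun_fst fun x : ι → X ↦ signedSup (fun k i ↦ f k (x i)) fun i ↦ !(σ i)]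
        simp

omit hf in
theorem bddAbove_range_sum_integral_sub (x : ι → X) :
    BddAbove (range fun k ↦ ∑ i, (∫ y, f k y ∂μ i - f k (x i))) := by
  refine ⟨∑ _i : ι, (C + C), forall_mem_range.2 fun k ↦ Finset.sum_le_sum fun i _ ↦ ?_⟩
  have hmean : |∫ y, f k y ∂μ i| ≤ C := by
    simpa using norm_integral_le_of_norm_le_const (μ := μ i) (f := f k) (.of_forall (hfC k))
  linarith [le_of_abs_le hmean, neg_le_of_abs_le (hfC k (x i))]

omit hf in
theorem sum_integral_sub_le_uniformDeviation (x : ι → X) (k : κ) :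
    ∑ i, (∫ y, f k y ∂μ i - f k (x i)) ≤ uniformDeviation μ f x :=
  le_ciSup (bddAbove_range_sum_integral_sub hfC x) k

omit hf in
theorem hasBoundedDifferences_uniformDeviation [Nonempty κ] {c : ℝ}
    (hc : ∀ k a b, f k a ≤ f k b + c) :
    HasBoundedDifferences (uniformDeviation μ f) fun _ ↦ c :=
  .ciSup (fun k ↦ hasBoundedDifferences_sum (g := fun i a ↦ ∫ y, f k y ∂μ i - f k a)
    fun i a b ↦ by linarith [hc k b a]) (bddAbove_range_sum_integral_sub hfC)

theorem integral_uniformDeviation_le [Countable κ] [Nonempty κ] [DecidableEq ι] :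
    ∫ x, uniformDeviation μ f x ∂.pi μ ≤
      2 * ∫ x, rademacherAverage (fun k i ↦ f k (x i)) ∂.pi μ := by
  have hdiff_int : Integrable (fun p : (ι → X) × (ι → X) ↦
      signedSup (fun k i ↦ f k (p.2 i) - f k (p.1 i)) fun _ ↦ true)
      ((Measure.pi μ).prod (.pi μ)) :=
    integrable_signedSup (C := C + C) (by fun_prop)
      (fun p k i ↦ (abs_sub _ _).trans (add_le_add (hfC k _) (hfC k _))) _
  have hdev_int : Integrable (uniformDeviation μ f) (.pi μ) :=
    (hasBoundedDifferences_uniformDeviation hfC fun k a b ↦ (by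
      linarith [abs_le.1 (hfC k a), abs_le.1 (hfC k b)] : f k a ≤ f k b + 2 * C)).integrable
      (measurable_uniformDeviation μ hf)
  calc ∫ x, uniformDeviation μ f x ∂.pi μ
      ≤ ∫ x, ∫ y, signedSup (fun k i ↦ f k (y i) - f k (x i)) (fun _ ↦ true) ∂.pi μ ∂.pi μ :=
        integral_mono hdev_int hdiff_int.integral_prod_left
          (uniformDeviation_le_integral_signedSup hf hfC)
    _ = 𝔼 _σ : ι → Bool, ∫ p, signedSup (fun k i ↦ f k (p.2 i) - f k (p.1 i)) (fun _ ↦ true)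
          ∂(Measure.pi μ).prod (.pi μ) := by
        rw [Fintype.expect_const, integral_prod _ hdiff_int]
    _ ≤ 𝔼 σ : ι → Bool, (∫ x, signedSup (fun k i ↦ f k (x i)) σ ∂.pi μ +
          ∫ x, signedSup (fun k i ↦ f k (x i)) (fun i ↦ !(σ i)) ∂.pi μ) :=
        Finset.expect_le_expect fun σ _ ↦ integral_signedSup_sub_le hf hfC σ
    _ = 2 * ∫ x, rademacherAverage (fun k i ↦ f k (x i)) ∂.pi μ := by
        rw [Finset.expect_add_distrib,
          expect_comp_not fun σ ↦ ∫ x, signedSup (fun k i ↦ f k (x i)) σ ∂.pi μ, two_mul,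
          integral_rademacherAverage
          (v := fun (x : ι → X) k i ↦ f k (x i)) (by fun_prop) fun x k i ↦ hfC k (x i)]

end Symmetrization

theorem abs_le_one_of_mem_Icc {t : ℝ} (ht : t ∈ Icc (0 : ℝ) 1) : |t| ≤ 1 :=
  (abs_of_nonneg ht.1).trans_le ht.2

section Generalization

variable {ι κ X : Type*} [Fintype ι] [DecidableEq ι] [Nonempty κ] [MeasurableSpace X]
  {μ : ι → Measure X} [∀ i, IsProbabilityMeasure (μ i)] {f h : κ → X → ℝ}

theorem hasBoundedDifferences_uniformDeviation_sub_rademacherAverage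
    (hf01 : ∀ k x, f k x ∈ Icc (0 : ℝ) 1) (hh01 : ∀ k x, h k x ∈ Icc (0 : ℝ) 1) :
    HasBoundedDifferences
      (fun x ↦ uniformDeviation μ f x - 2 * rademacherAverage fun k i ↦ h k (x i))
      fun _ ↦ 3 := by
  have hdev : HasBoundedDifferences (uniformDeviation μ f) fun _ ↦ 1 :=
    hasBoundedDifferences_uniformDeviation (fun k x ↦ abs_le_one_of_mem_Icc (hf01 k x))
      fun k a b ↦ by linarith [(hf01 k a).2, (hf01 k b).1]
  have hrad : HasBoundedDifferences
      (fun x : ι → X ↦ rademacherAverage fun k i ↦ h k (x i)) fun _ ↦ 1 :=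
    hasBoundedDifferences_rademacherAverage (f := fun k _ ↦ h k)
      (fun k _ x ↦ abs_le_one_of_mem_Icc (hh01 k x)) fun k _ a b ↦
        abs_sub_le_of_nonneg_of_le (hh01 k a).1 (hh01 k a).2 (hh01 k b).1 (hh01 k b).2
  convert hdev.sub (hrad.const_mul zero_le_two) using 2
  norm_num

variable [Countable κ]

theorem integral_uniformDeviation_le_of_abs_sub_le {C : ℝ} (hf : ∀ k, Measurable (f k))
    (hh : ∀ k, Measurable (h k)) (hfC : ∀ k x, |f k x| ≤ C) (hhC : ∀ k x, |h k x| ≤ C)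
    (hfh : ∀ x k l, |f k x - f l x| ≤ |h k x - h l x|) :
    ∫ x, uniformDeviation μ f x ∂.pi μ ≤
      2 * ∫ x, rademacherAverage (fun k i ↦ h k (x i)) ∂.pi μ := by
  have hint {g : κ → X → ℝ} (hg : ∀ k, Measurable (g k)) (hgC : ∀ k x, |g k x| ≤ C) :
      Integrable (fun x : ι → X ↦ rademacherAverage fun k i ↦ g k (x i)) (.pi μ) :=
    integrable_rademacherAverage (v := fun (x : ι → X) k i ↦ g k (x i)) (by fun_prop)
      fun x k i ↦ hgC k (x i)
  refine (integral_uniformDeviation_le hf hfC).trans ?_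
  gcongr
  exacts [hint hf hfC, hint hh hhC, fun x ↦ rademacherAverage_le_of_abs_sub_le
    (fun k i ↦ hhC k (x i)) (fun k i ↦ hfC k (x i)) fun i k l ↦ hfh (x i) k l]

theorem measureReal_uniformDeviation_sub_rademacherAverage_ge_le
    (hf : ∀ k, Measurable (f k)) (hh : ∀ k, Measurable (h k))
    (hf01 : ∀ k x, f k x ∈ Icc (0 : ℝ) 1) (hh01 : ∀ k x, h k x ∈ Icc (0 : ℝ) 1)
    (hfh : ∀ x k l, |f k x - f l x| ≤ |h k x - h l x|) {ε : ℝ} (hε : 0 ≤ ε) :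
    (Measure.pi μ).real
        {x | ε ≤ uniformDeviation μ f x - 2 * rademacherAverage fun k i ↦ h k (x i)} ≤
      Real.exp (-2 * ε ^ 2 / (9 * Fintype.card ι)) := by
  have hfC (k : κ) (x : X) := abs_le_one_of_mem_Icc (hf01 k x)
  have hhC (k : κ) (x : X) := abs_le_one_of_mem_Icc (hh01 k x)
  set R : (ι → X) → ℝ := fun x ↦ rademacherAverage fun k i ↦ h k (x i)
  set G : (ι → X) → ℝ := fun x ↦ uniformDeviation μ f x - 2 * R x
  have hR_meas : Measurable R := measurable_rademacherAverage (by fun_prop)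
  have hR_int : Integrable R (.pi μ) :=
    integrable_rademacherAverage (by fun_prop) fun x k i ↦ hhC k (x i)
  have hdev_meas := measurable_uniformDeviation μ hf
  have hG_meas : Measurable G := hdev_meas.sub (hR_meas.const_mul 2)
  have hG : HasBoundedDifferences G fun _ ↦ (3 : ℝ≥0) :=
    hasBoundedDifferences_uniformDeviation_sub_rademacherAverage hf01 hh01
  have hmean : ∫ x, G x ∂.pi μ ≤ 0 := by
    have hdev_int : Integrable (uniformDeviation μ f) (.pi μ) :=
      ((hG.integrable hG_meas).add (hR_int.const_mul 2)).congr (.of_forall fun x ↦ by simp [G])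
    rw [integral_sub hdev_int (hR_int.const_mul 2), integral_const_mul, sub_nonpos]
    exact integral_uniformDeviation_le_of_abs_sub_le hf hh hfC hhC hfh
  calc (Measure.pi μ).real {x | ε ≤ G x}
      ≤ (Measure.pi μ).real {x | ε ≤ G x - ∫ y, G y ∂.pi μ} :=
        measureReal_mono fun x (hx : ε ≤ G x) ↦ show ε ≤ G x - _ by linarith
    _ ≤ Real.exp (-ε ^ 2 / (2 * ↑(∑ _i : ι, (3 / 2 : ℝ≥0) ^ 2))) :=
        (hG.hasSubgaussianMGF_sub_integral hG_meas).measure_ge_le hε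
    _ = Real.exp (-2 * ε ^ 2 / (9 * Fintype.card ι)) := by
        congr 1
        simp only [Finset.sum_const, Finset.card_univ, nsmul_eq_mul]
        push_cast
        field_simp
        norm_num

end Generalization

theorem radS_eq_rademacherAverage_div {X : Type*} {n : ℕ} (x : Fin n → X) (H : Set (X → ℝ)) :
    radS x H = (rademacherAverage fun (h : H) i ↦ h.1 (x i)) / n := by
  have hsup (σ : Fin n → Bool) :
      sSup ((fun h ↦ (1 / (n : ℝ)) * ∑ i, (if σ i then (1 : ℝ) else -1) * h (x i)) '' H) =
        (1 / (n : ℝ)) * signedSup (fun (h : H) i ↦ h.1 (x i)) σ := by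
    rw [sSup_image', signedSup, Real.mul_iSup_of_nonneg (by positivity)]
    rfl
  simp only [radS, hsup, ← Finset.mul_sum, rademacherAverage, Fintype.expect_eq_sum_div_card]
  simp only [Fintype.card_pi, Fintype.card_bool, Finset.prod_const, Finset.card_univ,
    Fintype.card_fin]
  push_cast
  ring

theorem integral_le_of_uniformDeviation_sub_rademacherAverage_lt {X : Type*} [MeasurableSpace X]
    {P : Measure X} [IsProbabilityMeasure P] {H : Set (X → ℝ)} {L : (X → ℝ) → X → ℝ} {n : ℕ} {C : ℝ}
    (hLC : ∀ h ∈ H, ∀ x, |L h x| ≤ C) (hn : n ≠ 0) {ω : Fin n → X} {r : ℝ}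
    (hω : uniformDeviation (fun _ ↦ P) (fun h : H ↦ L h) ω -
      2 * rademacherAverage (fun (h : H) i ↦ h.1 (ω i)) < n * r) {h : X → ℝ} (hh : h ∈ H) :
    ∫ x, L h x ∂P ≤ (1 / (n : ℝ)) * ∑ i, L h (ω i) + 2 * radS ω H + r := by
  have hdev := sum_integral_sub_le_uniformDeviation (μ := fun _ ↦ P) (f := fun h : H ↦ L h)
    (fun h ↦ hLC h h.2) ω ⟨h, hh⟩
  simp only [Finset.sum_sub_distrib, Finset.sum_const, Finset.card_univ, Fintype.card_fin,
    nsmul_eq_mul] at hdev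
  rw [radS_eq_rademacherAverage_div]
  refine le_of_mul_le_mul_left (a := (n : ℝ)) ?_ (by positivity)
  field_simp
  linarith

theorem exp_neg_two_mul_sq_sqrt_log {δ m : ℝ} (hδ : δ ∈ Ioc (0 : ℝ) 1) (hm : 0 < m) :
    Real.exp (-2 * (m * (3 * Real.sqrt (Real.log (1 / δ) / (2 * m)))) ^ 2 / (9 * m)) = δ := by
  have hlog : 0 ≤ Real.log (1 / δ) := Real.log_nonneg (one_le_one_div hδ.1 hδ.2)
  have hexponent : -2 * (m * (3 * Real.sqrt (Real.log (1 / δ) / (2 * m)))) ^ 2 / (9 * m) =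
      Real.log δ := by
    rw [mul_pow, mul_pow, Real.sq_sqrt (by positivity), one_div, Real.log_inv]
    field_simp
    ring
  rw [hexponent, Real.exp_log hδ.1]

theorem ofReal_one_sub_le_of_measureReal_compl_le {Ω : Type*} [MeasurableSpace Ω] {ρ : Measure Ω}
    [IsProbabilityMeasure ρ] {s : Set Ω} {δ : ℝ} (h : ρ.real sᶜ ≤ δ) :
    ENNReal.ofReal (1 - δ) ≤ ρ s := by
  have hcover : 1 ≤ ρ.real s + ρ.real sᶜ := by
    simpa only [union_compl_self, probReal_univ] using measureReal_union_le (μ := ρ) s sᶜ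
  exact ENNReal.ofReal_le_of_le_toReal (by linarith [measureReal_def ρ s])

theorem stmt_3_general {X : Type*} [MeasurableSpace X] (DS : Measure X) [IsProbabilityMeasure DS]
    (H : Set (X → ℝ)) (hHcount : H.Countable) (hHne : H.Nonempty)
    (hmeas : ∀ h ∈ H, Measurable h) (hrange : ∀ h ∈ H, ∀ x, h x ∈ Icc (0 : ℝ) 1)
    (L : (X → ℝ) → X → ℝ) (hLmeas : ∀ h ∈ H, Measurable (L h))
    (hLrange : ∀ h ∈ H, ∀ x, L h x ∈ Icc (0 : ℝ) 1)
    (hLlip : ∀ g ∈ H, ∀ h ∈ H, ∀ x, |L g x - L h x| ≤ |g x - h x|)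
    (n : ℕ) (hn : 1 ≤ n) (δ : ℝ) (hδ : δ ∈ Ioc (0 : ℝ) 1) :
    ENNReal.ofReal (1 - δ) ≤
      (Measure.pi fun _ : Fin n ↦ DS)
        {ω | ∀ h ∈ H, ∫ x, L h x ∂DS ≤
          (1 / (n : ℝ)) * ∑ i, L h (ω i) + 2 * radS ω H +
            3 * Real.sqrt (Real.log (1 / δ) / (2 * n))} := by
  have := hHcount.to_subtype
  have := hHne.to_subtype
  set r : ℝ := 3 * Real.sqrt (Real.log (1 / δ) / (2 * n))
  have htail := measureReal_uniformDeviation_sub_rademacherAverage_ge_le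
    (ι := Fin n) (μ := fun _ ↦ DS) (f := fun h : H ↦ L h) (h := fun h : H ↦ h.1)
    (fun h ↦ hLmeas h h.2) (fun h ↦ hmeas h h.2) (fun h ↦ hLrange h h.2) (fun h ↦ hrange h h.2)
    (fun x g h ↦ hLlip g g.2 h h.2 x) (ε := n * r) (by positivity)
  rw [Fintype.card_fin, exp_neg_two_mul_sq_sqrt_log hδ (by exact_mod_cast hn)] at htail
  refine ofReal_one_sub_le_of_measureReal_compl_le ((measureReal_mono ?_).trans htail)
  refine compl_subset_comm.1 fun ω hω h hh ↦ ?_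
  exact integral_le_of_uniformDeviation_sub_rademacherAverage_lt
    (fun h hh x ↦ abs_le_one_of_mem_Icc (hLrange h hh x)) (by lia) (not_le.1 hω) hh

theorem stmt_3 {X : Type*} [MeasurableSpace X]
    (DS : Measure X) [IsProbabilityMeasure DS]
    (fS : X → ℝ) (hfSmeas : Measurable fS) (hfSrange : ∀ x, fS x ∈ Icc (0 : ℝ) 1)
    (H : Set (X → ℝ)) (hHcount : H.Countable) (hHne : H.Nonempty)
    (hmeas : ∀ h ∈ H, Measurable h)
    (hrange : ∀ h ∈ H, ∀ x, h x ∈ Icc (0 : ℝ) 1)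
    (n : ℕ) (hn : 1 ≤ n) (δ : ℝ) (hδ : δ ∈ Ioo (0 : ℝ) 1) :
    ENNReal.ofReal (1 - δ) ≤
      (Measure.pi fun _ : Fin n => DS)
        {ω | ∀ h ∈ H,
          ∫ x, |h x - fS x| ∂DS ≤
            (1 / (n : ℝ)) * ∑ i, |h (ω i) - fS (ω i)| + 2 * radS ω H +
              3 * Real.sqrt (Real.log (2 / δ) / (2 * n))} := by
  have h := stmt_3_general DS H hHcount hHne hmeas hrange (fun h x ↦ |h x - fS x|)
    (fun h hh ↦ ((hmeas h hh).sub hfSmeas).abs)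
    (fun h hh x ↦ ⟨abs_nonneg _, abs_sub_le_of_nonneg_of_le (hrange h hh x).1 (hrange h hh x).2
      (hfSrange x).1 (hfSrange x).2⟩)
    (fun g _ h _ x ↦ by simpa using abs_abs_sub_abs_le (g x - fS x) (h x - fS x))
    n hn (δ / 2) ⟨half_pos hδ.1, by linarith [hδ.2]⟩
  rw [one_div_div] at h
  exact (ENNReal.ofReal_le_ofReal (by linarith [hδ.1])).trans h
end

section
/- Let X be a measurable space, D and D' probability measures on X, and H̃ a countable nonempty set of measurable functions from X to {0,1}. Fix n ≥ 1 and δ ∈ (0,1). Then with probability at least 1 − δ over independent i.i.d. samples S = (x_1, …, x_n) ∼ D^n and S' = (x'_1, …, x'_n) ∼ (D')^n: d_{H̃}(D, D') ≤ d_{H̃}(D̂, D̂') + 2·Rad_S(H̃) + 2·Rad_{S'}(H̃) + 6·√(log(4/δ)/(2n)), where D̂ and D̂' are the empirical distributions of S and S' (uniform measures on the sample points). -/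
open MeasureTheory Set
open scoped ENNReal

/-- The H-divergence induced by a class `H` of `{0,1}`-valued functions:
`d_H(P,Q) := sup_{h ∈ H} |P({x : h(x) = 1}) − Q({x : h(x) = 1})|`. -/
noncomputable def dH {X : Type*} [MeasurableSpace X] (H : Set (X → ℝ))
    (P Q : Measure X) : ℝ :=
  sSup ((fun h => |(P {x | h x = 1}).toReal - (Q {x | h x = 1}).toReal|) '' H)

/-- The empirical distribution of the sample `ω = (x_1, …, x_n)`: the uniform
measure on the sample points. -/
noncomputable def empD {X : Type*} [MeasurableSpace X] {n : ℕ} (ω : Fin n → X) : Measure X :=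
  ((n : ℝ≥0∞))⁻¹ • ∑ i, Measure.dirac (ω i)

/-! The left-hand side is deterministic, so no uniform convergence is needed: pick a single `h`
that almost attains the supremum defining `dH H D D'`. By Hoeffding's inequality for the two
independent samples, `|D̂{h = 1} - D̂'{h = 1}|` falls short of `|D{h = 1} - D'{h = 1}|` by more than
`t` with probability at most `exp (-2t² / (1/m + 1/n))`, and it never exceeds `dH H D̂ D̂'`. Letting
`h` approach the supremum keeps the same bound, for an arbitrary class. The Rademacher complexities
are nonnegative and only weaken the estimate. -/

open ProbabilityTheory Filter Topology
open scoped NNReal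

section SubGaussian

variable {Ω : Type*} [MeasurableSpace Ω] {μ : Measure Ω}

lemma hasSubgaussianMGF_sum_eval {ι : Type*} [Fintype ι] [IsProbabilityMeasure μ]
    {f : Ω → ℝ} {c : ℝ≥0} (hf : HasSubgaussianMGF f c μ) :
    HasSubgaussianMGF (fun ω : ι → Ω => ∑ i, f (ω i)) (Fintype.card ι * c)
      (Measure.pi fun _ => μ) := by
  have hcoord (i : ι) : HasSubgaussianMGF (fun ω : ι → Ω => f (ω i)) c (Measure.pi fun _ => μ) := by
    have hmp := measurePreserving_eval (fun _ : ι => μ) i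
    exact .of_map hmp.measurable.aemeasurable (hmp.map_eq.symm ▸ hf)
  simpa using HasSubgaussianMGF.sum_of_iIndepFun
    (iIndepFun_pi fun _ : ι => hf.aemeasurable) fun i (_ : i ∈ Finset.univ) => hcoord i

lemma measureReal_abs_add_le_abs_le [IsFiniteMeasure μ] {Y : Ω → ℝ} {a : ℝ} {c : ℝ≥0}
    (hY : HasSubgaussianMGF (fun ω => Y ω - a) c μ) {t : ℝ} (ht : 0 ≤ t) :
    μ.real {ω | |Y ω| + t ≤ |a|} ≤ Real.exp (-t ^ 2 / (2 * c)) := by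
  rcases le_total 0 a with ha | ha
  · refine (measureReal_mono fun ω hω => ?_).trans (hY.neg.measure_ge_le ht)
    simp only [mem_ofPred_eq, abs_of_nonneg ha, Pi.neg_apply] at hω ⊢
    linarith [le_abs_self (Y ω)]
  · refine (measureReal_mono fun ω hω => ?_).trans (hY.measure_ge_le ht)
    simp only [mem_ofPred_eq, abs_of_nonpos ha] at hω ⊢
    linarith [neg_abs_le (Y ω)]

end SubGaussian

section EmpiricalMeasure

variable {X : Type*} [MeasurableSpace X] {m n : ℕ}

lemma measureReal_empD (ω : Fin n → X) {s : Set X} (hs : MeasurableSet s) :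
    (empD ω).real s = (n : ℝ)⁻¹ * ∑ i, s.indicator 1 (ω i) := by
  rw [empD, measureReal_ennreal_smul_apply, ENNReal.toReal_inv, ENNReal.toReal_natCast,
    measureReal_def, Measure.finsetSum_apply, ENNReal.toReal_sum (by finiteness)]
  congr! 2 with i
  by_cases hi : ω i ∈ s <;> simp [hs, hi]

instance isProbabilityMeasure_empD [NeZero n] (ω : Fin n → X) :
    IsProbabilityMeasure (empD ω) :=
  ⟨by simpa [empD] using ENNReal.inv_mul_cancel (by simp [NeZero.ne]) (ENNReal.natCast_ne_top n)⟩

variable (D D' : Measure X) [IsProbabilityMeasure D] [IsProbabilityMeasure D']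

lemma hasSubgaussianMGF_measureReal_empD_sub [NeZero n] {s : Set X} (hs : MeasurableSet s) :
    HasSubgaussianMGF (fun ω => (empD ω).real s - D.real s) (4 * n : ℝ≥0)⁻¹
      (Measure.pi fun _ : Fin n => D) := by
  have hindicator : HasSubgaussianMGF (fun x => s.indicator 1 x - D.real s) (1 / 4) D := by
    have hmem (x : X) : s.indicator (1 : X → ℝ) x ∈ Icc 0 1 :=
      ⟨indicator_nonneg (by simp) x, indicator_le_self' (by simp) x⟩
    have h := hasSubgaussianMGF_of_mem_Icc (μ := D)
      (measurable_one.indicator hs).aemeasurable (ae_of_all D hmem)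
    rw [integral_indicator_one hs] at h
    convert! h using 1
    norm_num
  have hn : (n : ℝ) ≠ 0 := NeZero.ne _
  convert! (hasSubgaussianMGF_sum_eval (ι := Fin n) hindicator).const_mul (n : ℝ)⁻¹ using 1
  · ext ω
    simp [measureReal_empD ω hs, mul_sub, hn]
  · ext
    change (4 * (n : ℝ))⁻¹ = (n : ℝ)⁻¹ ^ 2 * ((Fintype.card (Fin n) : ℝ) * (1 / 4))
    rw [Fintype.card_fin]
    field_simp

lemma hasSubgaussianMGF_measureReal_empD_sub_empD [NeZero m] [NeZero n] {s : Set X}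
    (hs : MeasurableSet s) :
    HasSubgaussianMGF
      (fun p => (empD p.1).real s - (empD p.2).real s - (D.real s - D'.real s))
      ((4 * m : ℝ≥0)⁻¹ + (4 * n : ℝ≥0)⁻¹)
      ((Measure.pi fun _ : Fin m => D).prod (Measure.pi fun _ : Fin n => D')) := by
  have hD := hasSubgaussianMGF_measureReal_empD_sub (n := m) D hs
  have hD' := hasSubgaussianMGF_measureReal_empD_sub (n := n) D' hs
  have hfst := measurePreserving_fst (μ := Measure.pi fun _ : Fin m => D)
    (ν := Measure.pi fun _ : Fin n => D')
  have hsnd := measurePreserving_snd (μ := Measure.pi fun _ : Fin m => D)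
    (ν := Measure.pi fun _ : Fin n => D')
  convert! HasSubgaussianMGF.sub_of_indepFun
    (.of_map hfst.measurable.aemeasurable (hfst.map_eq.symm ▸ hD))
    (.of_map hsnd.measurable.aemeasurable (hsnd.map_eq.symm ▸ hD'))
    (indepFun_prod₀ hD.aemeasurable hD'.aemeasurable) using 2 with p
  simp only [Function.comp_apply]
  ring

end EmpiricalMeasure

section Divergence

variable {X : Type*} [MeasurableSpace X] {H : Set (X → ℝ)}

lemma abs_measureReal_sub_le_dH (P Q : Measure X) [IsFiniteMeasure P] [IsFiniteMeasure Q]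
    {h : X → ℝ} (hh : h ∈ H) :
    |P.real {x | h x = 1} - Q.real {x | h x = 1}| ≤ dH H P Q := by
  refine le_csSup ⟨P.real univ + Q.real univ, ?_⟩ (mem_image_of_mem _ hh)
  rintro _ ⟨g, -, rfl⟩
  have hP := measureReal_mono (μ := P) (subset_univ {x | g x = 1})
  have hQ := measureReal_mono (μ := Q) (subset_univ {x | g x = 1})
  refine (abs_sub _ _).trans (add_le_add ?_ ?_)
  · rwa [ENNReal.abs_toReal]
  · rwa [ENNReal.abs_toReal]

lemma exists_lt_abs_measureReal_sub_of_lt_dH {P Q : Measure X} (hne : H.Nonempty) {r : ℝ}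
    (hr : r < dH H P Q) : ∃ h ∈ H, r < |P.real {x | h x = 1} - Q.real {x | h x = 1}| := by
  obtain ⟨_, ⟨h, hh, rfl⟩, hlt⟩ := exists_lt_of_lt_csSup (hne.image _) hr
  exact ⟨h, hh, hlt⟩

lemma measureReal_dH_empD_add_lt_dH_le (D D' : Measure X) [IsProbabilityMeasure D]
    [IsProbabilityMeasure D'] (hne : H.Nonempty) (hmeas : ∀ h ∈ H, Measurable h)
    {m n : ℕ} [NeZero m] [NeZero n] {t : ℝ} (ht : 0 ≤ t) :
    ((Measure.pi fun _ : Fin m => D).prod (Measure.pi fun _ : Fin n => D')).real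
        {p | dH H (empD p.1) (empD p.2) + t < dH H D D'} ≤
      Real.exp (-2 * t ^ 2 / ((m : ℝ)⁻¹ + (n : ℝ)⁻¹)) := by
  rcases ht.eq_or_lt with rfl | ht
  · simp
  have hlim : Tendsto (fun r : ℝ => Real.exp (-2 * r ^ 2 / ((m : ℝ)⁻¹ + (n : ℝ)⁻¹))) (𝓝[<] t)
      (𝓝 (Real.exp (-2 * t ^ 2 / ((m : ℝ)⁻¹ + (n : ℝ)⁻¹)))) :=
    (Continuous.tendsto (by fun_prop) t).mono_left nhdsWithin_le_nhds
  refine ge_of_tendsto hlim ?_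
  filter_upwards [Ioo_mem_nhdsLT ht] with r ⟨hr, hrt⟩
  obtain ⟨h, hh, hsup⟩ :=
    exists_lt_abs_measureReal_sub_of_lt_dH hne (sub_lt_self (dH H D D') (sub_pos.2 hrt))
  have hset : MeasurableSet {x | h x = 1} := hmeas h hh (measurableSet_singleton 1)
  have htail := measureReal_abs_add_le_abs_le (hasSubgaussianMGF_measureReal_empD_sub_empD
    (m := m) (n := n) D D' hset) hr.le
  refine (measureReal_mono fun p hp => ?_).trans (htail.trans_eq ?_)
  · have hemp := abs_measureReal_sub_le_dH (empD p.1) (empD p.2) hh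
    simp only [mem_ofPred_eq] at hp ⊢
    linarith
  · push_cast
    congr 1
    field_simp
    ring

end Divergence

section Rademacher

lemma sum_sign_eq_zero {ι : Type*} [Fintype ι] [DecidableEq ι] (i : ι) :
    ∑ σ : ι → Bool, (if σ i then (1 : ℝ) else -1) = 0 := by
  have hflip := (Equiv.piCongrRight fun _ : ι => Equiv.boolNot).sum_comp
    fun σ => if σ i then (1 : ℝ) else -1
  have hneg : ∀ b : Bool, (if (!b) then (1 : ℝ) else -1) = -(if b then 1 else -1) := by simp
  simp only [Equiv.piCongrRight_apply, Pi.map_apply, Equiv.boolNot_apply, hneg,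
    Finset.sum_neg_distrib] at hflip
  linarith

/-- Each supremum dominates its value at a fixed function, and these values average to zero. -/
lemma radS_nonneg {X : Type*} {n : ℕ} (x : Fin n → X) {H : Set (X → ℝ)} {C : ℝ}
    (hH : ∀ h ∈ H, ∀ i, |h (x i)| ≤ C) : 0 ≤ radS x H := by
  rcases H.eq_empty_or_nonempty with rfl | ⟨g, hg⟩
  · simp [radS]
  have hbdd (σ : Fin n → Bool) : BddAbove
      ((fun h => (1 / (n : ℝ)) * ∑ i, (if σ i then (1 : ℝ) else -1) * h (x i)) '' H) := by
    refine ⟨1 / (n : ℝ) * ∑ _i : Fin n, C, ?_⟩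
    rintro _ ⟨h, hh, rfl⟩
    dsimp only
    gcongr with i
    refine (le_abs_self _).trans ?_
    rw [abs_mul]
    split_ifs <;> simpa using hH h hh i
  have hmean : ∑ σ : Fin n → Bool,
      (1 / (n : ℝ)) * ∑ i, (if σ i then (1 : ℝ) else -1) * g (x i) = 0 := by
    rw [← Finset.mul_sum, Finset.sum_comm]
    simp only [← Finset.sum_mul, sum_sign_eq_zero, zero_mul, Finset.sum_const_zero, mul_zero]
  exact div_nonneg (hmean.symm.le.trans <| Finset.sum_le_sum fun σ _ =>
    le_csSup (hbdd σ) (mem_image_of_mem _ hg)) (by positivity)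

end Rademacher

theorem stmt_5_general {X : Type*} [MeasurableSpace X]
    (D D' : Measure X) [IsProbabilityMeasure D] [IsProbabilityMeasure D']
    {H : Set (X → ℝ)} (hne : H.Nonempty) (hmeas : ∀ h ∈ H, Measurable h)
    (m n : ℕ) [NeZero m] [NeZero n] {δ : ℝ} (hδ : δ ∈ Ioo (0 : ℝ) 1) :
    ENNReal.ofReal (1 - δ) ≤
      ((Measure.pi fun _ : Fin m => D).prod (Measure.pi fun _ : Fin n => D'))
        {p | dH H D D' ≤ dH H (empD p.1) (empD p.2) +
          Real.sqrt (Real.log (1 / δ) * ((m : ℝ)⁻¹ + (n : ℝ)⁻¹) / 2)} := by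
  set t := Real.sqrt (Real.log (1 / δ) * ((m : ℝ)⁻¹ + (n : ℝ)⁻¹) / 2)
  set P := (Measure.pi fun _ : Fin m => D).prod (Measure.pi fun _ : Fin n => D')
  set A := {p : (Fin m → X) × (Fin n → X) | dH H D D' ≤ dH H (empD p.1) (empD p.2) + t}
  have hlog : 0 ≤ Real.log (1 / δ) := Real.log_nonneg (one_le_one_div hδ.1 hδ.2.le)
  have hexp : Real.exp (-2 * t ^ 2 / ((m : ℝ)⁻¹ + (n : ℝ)⁻¹)) = δ := by
    have hm : (m : ℝ) ≠ 0 := NeZero.ne _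
    rw [Real.sq_sqrt (by positivity)]
    convert! Real.exp_log hδ.1 using 2
    rw [one_div, Real.log_inv]
    field_simp
  have hcompl : P.real Aᶜ ≤ δ := by
    simpa only [A, compl_ofPred, not_le] using
      (measureReal_dH_empD_add_lt_dH_le D D' hne hmeas (Real.sqrt_nonneg _)).trans_eq hexp
  rw [ENNReal.ofReal_sub _ hδ.1.le, ENNReal.ofReal_one, tsub_le_iff_right]
  calc 1 = P univ := measure_univ.symm
    _ ≤ P A + P Aᶜ := measure_univ_le_add_compl A
    _ ≤ P A + ENNReal.ofReal δ := by
      gcongr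
      exact (ENNReal.le_ofReal_iff_toReal_le (measure_ne_top _ _) hδ.1.le).2 hcompl

lemma sqrt_log_one_div_le (n : ℕ) {δ : ℝ} (hδ : δ ∈ Ioo (0 : ℝ) 1) :
    Real.sqrt (Real.log (1 / δ) * ((n : ℝ)⁻¹ + (n : ℝ)⁻¹) / 2) ≤
      6 * Real.sqrt (Real.log (4 / δ) / (2 * n)) := by
  have hlog : Real.log (1 / δ) ≤ Real.log (4 / δ) := by
    have := hδ.1
    gcongr
    norm_num
  have hlog_four : 0 ≤ Real.log (4 / δ) :=
    Real.log_nonneg ((one_le_div hδ.1).2 (by linarith [hδ.2]))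
  calc Real.sqrt (Real.log (1 / δ) * ((n : ℝ)⁻¹ + (n : ℝ)⁻¹) / 2)
      ≤ Real.sqrt (36 * (Real.log (4 / δ) / (2 * n))) := by
        apply Real.sqrt_le_sqrt
        calc Real.log (1 / δ) * ((n : ℝ)⁻¹ + (n : ℝ)⁻¹) / 2 = Real.log (1 / δ) / n := by ring
          _ ≤ 18 * Real.log (4 / δ) / n := by gcongr; linarith
          _ = 36 * (Real.log (4 / δ) / (2 * n)) := by ring
    _ = 6 * Real.sqrt (Real.log (4 / δ) / (2 * n)) := by
        rw [Real.sqrt_mul (by norm_num), show (36 : ℝ) = 6 ^ 2 by norm_num,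
          Real.sqrt_sq (by norm_num)]

theorem stmt_5 {X : Type*} [MeasurableSpace X]
    (D D' : Measure X) [IsProbabilityMeasure D] [IsProbabilityMeasure D']
    (Ht : Set (X → ℝ)) (hHcount : Ht.Countable) (hHne : Ht.Nonempty)
    (hmeas : ∀ h ∈ Ht, Measurable h)
    (hrange : ∀ h ∈ Ht, ∀ x, h x = 0 ∨ h x = 1)
    (n : ℕ) (hn : 1 ≤ n) (δ : ℝ) (hδ : δ ∈ Ioo (0 : ℝ) 1) :
    ENNReal.ofReal (1 - δ) ≤
      ((Measure.pi fun _ : Fin n => D).prod (Measure.pi fun _ : Fin n => D'))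
        {p | dH Ht D D' ≤
          dH Ht (empD p.1) (empD p.2) + 2 * radS p.1 Ht + 2 * radS p.2 Ht +
            6 * Real.sqrt (Real.log (4 / δ) / (2 * n))} := by
  have : NeZero n := ⟨by omega⟩
  have hrad (x : Fin n → X) : 0 ≤ radS x Ht := radS_nonneg x (C := 1) fun h hh i => by
    rcases hrange h hh (x i) with hx | hx <;> simp [hx]
  refine (stmt_5_general D D' hHne hmeas n n hδ).trans (measure_mono fun p hp => ?_)
  rw [mem_ofPred_eq] at hp ⊢
  linarith [hrad p.1, hrad p.2, sqrt_log_one_div_le n hδ]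
end

section
/- Let X and Z be measurable spaces, D_S and D_T probability measures on X, f_S, f_T : X → {0,1} measurable labeling functions, g : X → Z measurable, and h : Z → {0,1} measurable. Let D_S^Z := g_*D_S, D_T^Z := g_*D_T, D_S^Y := (f_S)_*D_S, and D_T^Y := (f_T)_*D_T. Then d_JS(D_S^Y, D_T^Y) ≤ d_JS(D_S^Z, D_T^Z) + √(ε_S(h∘g)) + √(ε_T(h∘g)), where ε_S(h∘g) := E_{x∼D_S}[|h(g(x)) − f_S(x)|] and ε_T(h∘g) := E_{x∼D_T}[|h(g(x)) − f_T(x)|]. -/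
open MeasureTheory
open scoped ENNReal

/-- The Kullback–Leibler divergence `KL(μ‖ν) = ∫ log(dμ/dν) dμ` (real-valued;
this is the correct value whenever `μ ≪ ν`, as is the case below where the
second argument is the midpoint measure). -/
noncomputable def klReal {Ω : Type*} [MeasurableSpace Ω] (μ ν : Measure Ω) : ℝ :=
  ∫ x, llr μ ν x ∂μ

/-- The Jensen–Shannon divergence
`D_JS(μ‖ν) := (1/2)·KL(μ‖m) + (1/2)·KL(ν‖m)` with `m := (μ + ν)/2`. -/
noncomputable def jsDiv {Ω : Type*} [MeasurableSpace Ω] (μ ν : Measure Ω) : ℝ :=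
  (1 / 2) * klReal μ ((2 : ℝ≥0∞)⁻¹ • (μ + ν)) + (1 / 2) * klReal ν ((2 : ℝ≥0∞)⁻¹ • (μ + ν))

/-- The Jensen–Shannon distance `d_JS(μ,ν) := √(D_JS(μ‖ν))`. -/
noncomputable def jsDist {Ω : Type*} [MeasurableSpace Ω] (μ ν : Measure Ω) : ℝ :=
  Real.sqrt (jsDiv μ ν)

/-! For densities `0 ≤ a ≤ b` the Jensen–Shannon integrand is `1/4` times the integral of
`(x + y)⁻¹` over `(a, b]²`. Writing `(x + y)⁻¹ = ∫ exp (-(x t)) exp (-(y t)) dt` over `t > 0` turns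
it into a squared `L²(0, ∞)` distance, so the Jensen–Shannon distance is an `L²` distance and
satisfies the triangle inequality. Going from the source labels to the target labels through the
two laws of `h ∘ g`, the middle step is bounded by data processing, and the two outer ones because
the divergence is at most the total variation distance, which is at most the probability that the
two labels differ. -/

open Real Set

section ScalarIntegrand

/-- The integrand of `KL(μ‖(μ + ν)/2)` with respect to a measure for which `μ` and `ν` have
densities `a` and `b`. At `a = 0` it is `0`, as it should be. -/
noncomputable def klMid (a b : ℝ) : ℝ :=
  a * log (a / ((a + b) / 2))

/-- The integrand of the Jensen–Shannon divergence with respect to a measure for which the two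
arguments have densities `a` and `b`. -/
noncomputable def jsDensity (a b : ℝ) : ℝ :=
  (1 / 2) * klMid a b + (1 / 2) * klMid b a

lemma jsDensity_comm (a b : ℝ) : jsDensity a b = jsDensity b a := by
  unfold jsDensity
  ring

variable {a b : ℝ}

lemma klMid_le_mul_sub_div_add (ha : 0 ≤ a) (hb : 0 ≤ b) :
    klMid a b ≤ a * ((a - b) / (a + b)) := by
  rcases ha.eq_or_lt with rfl | ha
  · simp [klMid]
  · calc klMid a b ≤ a * (a / ((a + b) / 2) - 1) :=
          mul_le_mul_of_nonneg_left (log_le_sub_one_of_pos (by positivity)) ha.le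
      _ = a * ((a - b) / (a + b)) := by field_simp; ring

lemma sub_div_two_le_klMid (ha : 0 ≤ a) (hb : 0 ≤ b) : (a - b) / 2 ≤ klMid a b := by
  rcases ha.eq_or_lt with rfl | ha
  · simp only [klMid, zero_mul]
    linarith
  · calc (a - b) / 2 = a * (1 - (a / ((a + b) / 2))⁻¹) := by field_simp; ring
      _ ≤ klMid a b :=
          mul_le_mul_of_nonneg_left (one_sub_inv_le_log_of_pos (by positivity)) ha.le

lemma abs_klMid_le_add (ha : 0 ≤ a) (hb : 0 ≤ b) : |klMid a b| ≤ a + b := by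
  have upper : a * ((a - b) / (a + b)) ≤ a * 1 := by
    gcongr
    exact div_le_one_of_le₀ (by linarith) (by positivity)
  rw [abs_le]
  constructor
  · linarith [sub_div_two_le_klMid ha hb]
  · linarith [klMid_le_mul_sub_div_add ha hb]

lemma jsDensity_nonneg (ha : 0 ≤ a) (hb : 0 ≤ b) : 0 ≤ jsDensity a b := by
  unfold jsDensity
  linarith [sub_div_two_le_klMid ha hb, sub_div_two_le_klMid hb ha]

lemma jsDensity_le_abs_sub_div_two (ha : 0 ≤ a) (hb : 0 ≤ b) :
    jsDensity a b ≤ |a - b| / 2 := by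
  have ratio_le_one : |a - b| / (a + b) ≤ 1 :=
    div_le_one_of_le₀ (abs_sub_le_iff.2 ⟨by linarith, by linarith⟩) (by positivity)
  calc jsDensity a b
      ≤ (1 / 2) * (a * ((a - b) / (a + b))) + (1 / 2) * (b * ((b - a) / (b + a))) := by
        unfold jsDensity
        gcongr
        exacts [klMid_le_mul_sub_div_add ha hb, klMid_le_mul_sub_div_add hb ha]
    _ = |a - b| * (|a - b| / (a + b)) / 2 := by
        rw [← mul_div_assoc |a - b|, abs_mul_abs_self, add_comm b a]
        ring
    _ ≤ |a - b| / 2 := by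
        gcongr
        exact mul_le_of_le_one_right (abs_nonneg _) ratio_le_one

lemma klMid_eq_mul_log_sub (ha : 0 ≤ a) (hb : 0 ≤ b) :
    klMid a b = a * log (2 * a) - a * log (a + b) := by
  rcases ha.eq_or_lt with rfl | ha
  · simp [klMid]
  · rw [klMid, div_div_eq_mul_div, mul_comm a 2, log_div (by positivity) (by positivity), mul_sub]

end ScalarIntegrand

section LaplaceFeature

/-- The feature `t ↦ (1 - exp (-a t)) / (2 t)` of `a ≥ 0` in `L²(0, ∞)`. The squared distance
between the features of `a` and `b` is `jsDensity a b`. -/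
noncomputable def laplaceFeature (a t : ℝ) : ℝ :=
  (1 - exp (-(a * t))) / (2 * t)

variable {a b t : ℝ}

lemma lintegral_exp_neg_mul_Ioi {s : ℝ} (hs : 0 < s) :
    ∫⁻ t in Ioi 0, ENNReal.ofReal (exp (-(s * t))) = ENNReal.ofReal s⁻¹ := by
  simp only [← neg_mul]
  rw [← ofReal_integral_eq_lintegral_ofReal (integrableOn_exp_mul_Ioi (by linarith) 0)
    (.of_forall fun t ↦ (exp_pos _).le), integral_exp_mul_Ioi (by linarith)]
  simp

lemma lintegral_exp_neg_mul_Ioc (hab : a ≤ b) (ht : t ≠ 0) :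
    ∫⁻ x in Ioc a b, ENNReal.ofReal (exp (-(x * t))) =
      ENNReal.ofReal (2 * (laplaceFeature b t - laplaceFeature a t)) := by
  have exp_integrable : IntegrableOn (fun x ↦ exp (-(x * t))) (Ioc a b) :=
    (Continuous.integrableOn_Icc (by fun_prop)).mono_set Ioc_subset_Icc_self
  have antiderivative (x : ℝ) :
      HasDerivAt (fun x ↦ 2 * laplaceFeature x t) (exp (-(x * t))) x := by
    unfold laplaceFeature
    convert! ((((hasDerivAt_id x).mul_const t).neg.exp.const_sub 1).div_const (2 * t)).const_mul 2
      using 1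
    simp only [Pi.neg_apply, id_eq, one_mul]
    field_simp
  rw [← ofReal_integral_eq_lintegral_ofReal exp_integrable (.of_forall fun x ↦ (exp_pos _).le),
    ← intervalIntegral.integral_of_le hab, intervalIntegral.integral_eq_sub_of_hasDerivAt
      (fun x _ ↦ antiderivative x) (Continuous.intervalIntegrable (by fun_prop) a b), mul_sub]

lemma lintegral_inv_add_Ioc {x : ℝ} (hx : 0 < x) (ha : 0 ≤ a) (hab : a ≤ b) :
    ∫⁻ y in Ioc a b, ENNReal.ofReal (x + y)⁻¹ = ENNReal.ofReal (log (x + b) - log (x + a)) := by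
  have inv_integrable : IntervalIntegrable (fun y ↦ (x + y)⁻¹) volume a b := by
    refine ContinuousOn.intervalIntegrable_of_Icc hab (ContinuousOn.inv₀ (by fun_prop) ?_)
    exact fun y hy ↦ (add_pos_of_pos_of_nonneg hx (ha.trans hy.1)).ne'
  rw [← ofReal_integral_eq_lintegral_ofReal
      ((intervalIntegrable_iff_integrableOn_Ioc_of_le hab).1 inv_integrable),
    ← intervalIntegral.integral_of_le hab,
    intervalIntegral.integral_comp_add_left (fun y ↦ y⁻¹) x,
    integral_inv_of_pos (by linarith) (by linarith), log_div (by linarith) (by linarith)]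
  filter_upwards [ae_restrict_mem measurableSet_Ioc] with y hy
  exact inv_nonneg.2 (by linarith [hy.1])

lemma lintegral_lintegral_inv_add_Ioc (ha : 0 ≤ a) (hab : a ≤ b) :
    ∫⁻ x in Ioc a b, ∫⁻ y in Ioc a b, ENNReal.ofReal (x + y)⁻¹ =
      ENNReal.ofReal (4 * jsDensity a b) := by
  have log_integrable (c : ℝ) : IntervalIntegrable (fun x ↦ log (x + c)) volume a b := by
    simpa using intervalIntegral.intervalIntegrable_log'.comp_add_right (a := a + c) (b := b + c) c
  have diff_integrable : IntegrableOn (fun x ↦ log (x + b) - log (x + a)) (Ioc a b) :=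
    (intervalIntegrable_iff_integrableOn_Ioc_of_le hab).1
      ((log_integrable b).sub (log_integrable a))
  calc ∫⁻ x in Ioc a b, ∫⁻ y in Ioc a b, ENNReal.ofReal (x + y)⁻¹
      = ∫⁻ x in Ioc a b, ENNReal.ofReal (log (x + b) - log (x + a)) :=
        setLIntegral_congr_fun measurableSet_Ioc fun x hx ↦
          lintegral_inv_add_Ioc (ha.trans_lt hx.1) ha hab
    _ = ENNReal.ofReal (∫ x in a..b, log (x + b) - log (x + a)) := by
        rw [intervalIntegral.integral_of_le hab,
          ofReal_integral_eq_lintegral_ofReal diff_integrable]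
        filter_upwards [ae_restrict_mem measurableSet_Ioc] with x hx
        exact sub_nonneg.2 (log_le_log (by linarith [hx.1]) (by linarith))
    _ = ENNReal.ofReal (4 * jsDensity a b) := by
        rw [intervalIntegral.integral_sub (log_integrable b) (log_integrable a),
          intervalIntegral.integral_comp_add_right log,
          intervalIntegral.integral_comp_add_right log, integral_log, integral_log, jsDensity,
          klMid_eq_mul_log_sub ha (ha.trans hab),
          klMid_eq_mul_log_sub (ha.trans hab) ha, add_comm b a, ← two_mul, ← two_mul]
        ring_nf

lemma lintegral_sq_lintegral_exp_neg_mul (ha : 0 ≤ a) :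
    ∫⁻ t in Ioi 0, (∫⁻ x in Ioc a b, ENNReal.ofReal (exp (-(x * t)))) ^ 2 =
      ∫⁻ x in Ioc a b, ∫⁻ y in Ioc a b, ENNReal.ofReal (x + y)⁻¹ := by
  have sq_eq (t : ℝ) : (∫⁻ x in Ioc a b, ENNReal.ofReal (exp (-(x * t)))) ^ 2 =
      ∫⁻ x in Ioc a b, ∫⁻ y in Ioc a b, ENNReal.ofReal (exp (-((x + y) * t))) := by
    rw [sq, ← lintegral_lintegral_mul (by fun_prop) (by fun_prop)]
    simp only [← ENNReal.ofReal_mul (exp_pos _).le, ← exp_add, ← neg_add, ← add_mul]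
  simp only [sq_eq]
  rw [lintegral_lintegral_swap (Measurable.aemeasurable (by fun_prop))]
  refine setLIntegral_congr_fun measurableSet_Ioc fun x hx ↦ ?_
  rw [lintegral_lintegral_swap (Measurable.aemeasurable (by fun_prop))]
  exact setLIntegral_congr_fun measurableSet_Ioc fun y hy ↦
    lintegral_exp_neg_mul_Ioi (add_pos (ha.trans_lt hx.1) (ha.trans_lt hy.1))

lemma lintegral_sq_laplaceFeature_sub (ha : 0 ≤ a) (hb : 0 ≤ b) :
    ∫⁻ t in Ioi 0, ENNReal.ofReal ((laplaceFeature a t - laplaceFeature b t) ^ 2) =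
      ENNReal.ofReal (jsDensity a b) := by
  wlog hab : a ≤ b generalizing a b
  · simpa only [jsDensity_comm, sub_sq_comm] using this hb ha (le_of_not_ge hab)
  have feature_le {t : ℝ} (ht : 0 < t) : laplaceFeature a t ≤ laplaceFeature b t := by
    unfold laplaceFeature
    gcongr
  calc ∫⁻ t in Ioi 0, ENNReal.ofReal ((laplaceFeature a t - laplaceFeature b t) ^ 2)
      = ∫⁻ t in Ioi 0, ENNReal.ofReal (1 / 4) *
          (∫⁻ x in Ioc a b, ENNReal.ofReal (exp (-(x * t)))) ^ 2 := by
        refine setLIntegral_congr_fun measurableSet_Ioi fun t (ht : 0 < t) ↦ ?_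
        have hdiff := sub_nonneg.2 (feature_le ht)
        simp only [lintegral_exp_neg_mul_Ioc hab ht.ne']
        rw [← ENNReal.ofReal_pow (by positivity), ← ENNReal.ofReal_mul (by norm_num)]
        ring_nf
    _ = ENNReal.ofReal (1 / 4) * ENNReal.ofReal (4 * jsDensity a b) := by
        rw [lintegral_const_mul' _ _ ENNReal.ofReal_ne_top, lintegral_sq_lintegral_exp_neg_mul ha,
          lintegral_lintegral_inv_add_Ioc ha hab]
    _ = ENNReal.ofReal (jsDensity a b) := by
        rw [← ENNReal.ofReal_mul (by norm_num)]
        ring_nf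

end LaplaceFeature

section Density

variable {Ω : Type*} [MeasurableSpace Ω]

/-- The midpoint `(μ + ν) / 2` that `jsDiv` compares its two arguments with. -/
noncomputable def midMeasure (μ ν : Measure Ω) : Measure Ω :=
  (2 : ℝ≥0∞)⁻¹ • (μ + ν)

lemma midMeasure_comm (μ ν : Measure Ω) : midMeasure μ ν = midMeasure ν μ := by
  rw [midMeasure, midMeasure, add_comm]

lemma jsDiv_eq_klReal_midMeasure (μ ν : Measure Ω) :
    jsDiv μ ν = (1 / 2) * klReal μ (midMeasure μ ν) + (1 / 2) * klReal ν (midMeasure ν μ) := by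
  rw [midMeasure_comm ν μ]
  rfl

lemma absolutelyContinuous_midMeasure (μ ν : Measure Ω) : μ ≪ midMeasure μ ν :=
  (Measure.AbsolutelyContinuous.rfl.add_right ν).trans
    (Measure.absolutelyContinuous_smul (by simp))

lemma map_midMeasure {Ω' : Type*} [MeasurableSpace Ω'] (μ ν : Measure Ω) {g : Ω → Ω'}
    (hg : Measurable g) : (midMeasure μ ν).map g = midMeasure (μ.map g) (ν.map g) := by
  rw [midMeasure, midMeasure, Measure.map_smul, Measure.map_add _ _ hg]

variable {μ ν ρ : Measure Ω} [IsFiniteMeasure μ] [IsFiniteMeasure ν]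

instance : IsFiniteMeasure (midMeasure μ ν) :=
  Measure.smul_finite _ (by simp)

lemma integrable_klMid_rnDeriv :
    Integrable (fun x ↦ klMid (μ.rnDeriv ρ x).toReal (ν.rnDeriv ρ x).toReal) ρ := by
  refine (Measure.integrable_toReal_rnDeriv.add Measure.integrable_toReal_rnDeriv).mono'
    (f := fun x ↦ klMid (μ.rnDeriv ρ x).toReal (ν.rnDeriv ρ x).toReal) ?_
    (.of_forall fun x ↦ abs_klMid_le_add ENNReal.toReal_nonneg ENNReal.toReal_nonneg)
  unfold klMid
  exact Measurable.aestronglyMeasurable (by fun_prop)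

lemma integrable_jsDensity_rnDeriv :
    Integrable (fun x ↦ jsDensity (μ.rnDeriv ρ x).toReal (ν.rnDeriv ρ x).toReal) ρ :=
  (integrable_klMid_rnDeriv.const_mul _).add (integrable_klMid_rnDeriv.const_mul _)

variable [SigmaFinite ρ]

lemma toReal_rnDeriv_midMeasure :
    ∀ᵐ x ∂ρ, ((midMeasure μ ν).rnDeriv ρ x).toReal =
      ((μ.rnDeriv ρ x).toReal + (ν.rnDeriv ρ x).toReal) / 2 := by
  filter_upwards [Measure.rnDeriv_smul_left_of_ne_top (μ + ν) ρ (r := (2 : ℝ≥0∞)⁻¹) (by simp),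
    Measure.rnDeriv_add' μ ν ρ, μ.rnDeriv_ne_top ρ, ν.rnDeriv_ne_top ρ] with x hsmul hadd hμ hν
  rw [midMeasure, hsmul, Pi.smul_apply, hadd, Pi.add_apply, smul_eq_mul, ENNReal.toReal_mul,
    ENNReal.toReal_add hμ hν, ENNReal.toReal_inv, ENNReal.toReal_ofNat]
  ring

lemma rnDeriv_smul_llr_midMeasure_ae_eq :
    (fun x ↦ (μ.rnDeriv ρ x).toReal • llr μ (midMeasure μ ν) x) =ᵐ[ρ]
      fun x ↦ klMid (μ.rnDeriv ρ x).toReal (ν.rnDeriv ρ x).toReal := by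
  filter_upwards [Measure.rnDeriv_mul_rnDeriv (κ := ρ) (absolutelyContinuous_midMeasure μ ν),
    toReal_rnDeriv_midMeasure (μ := μ) (ν := ν) (ρ := ρ)] with x chain hmid
  rw [smul_eq_mul, klMid, ← hmid, ← chain, Pi.mul_apply, ENNReal.toReal_mul, llr]
  rcases eq_or_ne ((midMeasure μ ν).rnDeriv ρ x).toReal 0 with hzero | hzero
  · simp [hzero]
  · rw [mul_div_cancel_right₀ _ hzero]

lemma integrable_llr_midMeasure : Integrable (llr μ (midMeasure μ ν)) μ := by
  have hac : μ ≪ μ + ν := Measure.AbsolutelyContinuous.rfl.add_right ν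
  rw [← integrable_rnDeriv_smul_iff hac, integrable_congr rnDeriv_smul_llr_midMeasure_ae_eq]
  exact integrable_klMid_rnDeriv

lemma klReal_midMeasure_eq_integral_klMid (hμ : μ ≪ ρ) :
    klReal μ (midMeasure μ ν) =
      ∫ x, klMid (μ.rnDeriv ρ x).toReal (ν.rnDeriv ρ x).toReal ∂ρ := by
  rw [klReal, ← integral_rnDeriv_smul hμ, integral_congr_ae rnDeriv_smul_llr_midMeasure_ae_eq]

lemma jsDiv_eq_integral_jsDensity (hμ : μ ≪ ρ) (hν : ν ≪ ρ) :
    jsDiv μ ν = ∫ x, jsDensity (μ.rnDeriv ρ x).toReal (ν.rnDeriv ρ x).toReal ∂ρ := by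
  unfold jsDensity
  rw [jsDiv_eq_klReal_midMeasure, klReal_midMeasure_eq_integral_klMid hμ,
    klReal_midMeasure_eq_integral_klMid hν, integral_add (integrable_klMid_rnDeriv.const_mul _)
      (integrable_klMid_rnDeriv.const_mul _), integral_const_mul, integral_const_mul]

lemma jsDiv_nonneg (μ ν : Measure Ω) [IsFiniteMeasure μ] [IsFiniteMeasure ν] : 0 ≤ jsDiv μ ν := by
  rw [jsDiv_eq_integral_jsDensity (ρ := μ + ν) (Measure.AbsolutelyContinuous.rfl.add_right ν)
    (Measure.AbsolutelyContinuous.rfl.add_right' μ)]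
  exact integral_nonneg fun x ↦ jsDensity_nonneg ENNReal.toReal_nonneg ENNReal.toReal_nonneg

lemma jsDist_nonneg (μ ν : Measure Ω) : 0 ≤ jsDist μ ν :=
  sqrt_nonneg _

end Density

section Triangle

variable {Ω : Type*} [MeasurableSpace Ω] {μ ν ρ : Measure Ω}

/-- The feature of `μ` in `L²(ρ ⊗ dt)`: the Laplace feature of its density with respect to `ρ`. -/
noncomputable def jsFeature (μ ρ : Measure Ω) (z : Ω × ℝ) : ℝ :=
  laplaceFeature (μ.rnDeriv ρ z.1).toReal z.2

lemma measurable_jsFeature : Measurable (jsFeature μ ρ) := by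
  unfold jsFeature laplaceFeature
  fun_prop

variable [IsFiniteMeasure μ] [IsFiniteMeasure ν] [SigmaFinite ρ]

lemma lintegral_sq_jsFeature_sub (hμ : μ ≪ ρ) (hν : ν ≪ ρ) :
    ∫⁻ z, ENNReal.ofReal ((jsFeature μ ρ z - jsFeature ν ρ z) ^ 2)
      ∂(ρ.prod (volume.restrict (Ioi 0))) = ENNReal.ofReal (jsDiv μ ν) := by
  have measurable_sq :
      Measurable fun z ↦ ENNReal.ofReal ((jsFeature μ ρ z - jsFeature ν ρ z) ^ 2) :=
    ((measurable_jsFeature.sub measurable_jsFeature).pow_const 2).ennreal_ofReal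
  rw [lintegral_prod _ measurable_sq.aemeasurable, jsDiv_eq_integral_jsDensity hμ hν,
    ofReal_integral_eq_lintegral_ofReal integrable_jsDensity_rnDeriv
      (.of_forall fun x ↦ jsDensity_nonneg ENNReal.toReal_nonneg ENNReal.toReal_nonneg)]
  simp only [jsFeature, lintegral_sq_laplaceFeature_sub ENNReal.toReal_nonneg
    ENNReal.toReal_nonneg]

lemma eLpNorm_jsFeature_sub (hμ : μ ≪ ρ) (hν : ν ≪ ρ) :
    eLpNorm (jsFeature μ ρ - jsFeature ν ρ) 2 (ρ.prod (volume.restrict (Ioi 0))) =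
      ENNReal.ofReal (jsDist μ ν) := by
  have enorm_sq (z : Ω × ℝ) : ‖(jsFeature μ ρ - jsFeature ν ρ) z‖ₑ ^ (2 : ℝ) =
      ENNReal.ofReal ((jsFeature μ ρ z - jsFeature ν ρ z) ^ 2) := by
    rw [ENNReal.rpow_two, Real.enorm_eq_ofReal_abs, ← ENNReal.ofReal_pow (abs_nonneg _), sq_abs,
      Pi.sub_apply]
  rw [eLpNorm_eq_lintegral_rpow_enorm_toReal two_ne_zero ENNReal.ofNat_ne_top]
  simp only [ENNReal.toReal_ofNat, enorm_sq, lintegral_sq_jsFeature_sub hμ hν]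
  rw [ENNReal.ofReal_rpow_of_nonneg (jsDiv_nonneg μ ν) (by norm_num), jsDist, sqrt_eq_rpow]

theorem jsDist_triangle (μ ν ξ : Measure Ω) [IsFiniteMeasure μ] [IsFiniteMeasure ν]
    [IsFiniteMeasure ξ] : jsDist μ ξ ≤ jsDist μ ν + jsDist ν ξ := by
  let ρ := μ + ν + ξ
  have hμ : μ ≪ ρ := (Measure.AbsolutelyContinuous.rfl.add_right ν).add_right ξ
  have hν : ν ≪ ρ := (Measure.AbsolutelyContinuous.rfl.add_right' μ).add_right ξ
  have hξ : ξ ≪ ρ := Measure.AbsolutelyContinuous.rfl.add_right' _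
  rw [← ENNReal.ofReal_le_ofReal_iff (add_nonneg (jsDist_nonneg μ ν) (jsDist_nonneg ν ξ)),
    ENNReal.ofReal_add (jsDist_nonneg μ ν) (jsDist_nonneg ν ξ),
    ← eLpNorm_jsFeature_sub hμ hξ, ← eLpNorm_jsFeature_sub hμ hν, ← eLpNorm_jsFeature_sub hν hξ,
    ← sub_add_sub_cancel (jsFeature μ ρ) (jsFeature ν ρ) (jsFeature ξ ρ)]
  exact eLpNorm_add_le (measurable_jsFeature.sub measurable_jsFeature).aestronglyMeasurable
    (measurable_jsFeature.sub measurable_jsFeature).aestronglyMeasurable one_le_two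

end Triangle

section DataProcessing

open InformationTheory

variable {Ω Ω' : Type*} [MeasurableSpace Ω] [MeasurableSpace Ω'] {μ ν : Measure Ω}
  [IsFiniteMeasure μ] [IsFiniteMeasure ν] {g : Ω → Ω'}

lemma klReal_eq_toReal_klDiv_add_sub (h : klDiv μ ν ≠ ∞) :
    klReal μ ν = (klDiv μ ν).toReal + μ.real univ - ν.real univ := by
  obtain ⟨hac, hint⟩ := klDiv_ne_top_iff.1 h
  rw [toReal_klDiv hac hint, klReal]
  ring

theorem klReal_map_le (h : klDiv μ ν ≠ ∞) (hg : Measurable g) :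
    klReal (μ.map g) (ν.map g) ≤ klReal μ ν := by
  have hmap := klDiv_map_le μ ν hg
  rw [klReal_eq_toReal_klDiv_add_sub h, klReal_eq_toReal_klDiv_add_sub (ne_top_of_le_ne_top h hmap),
    map_measureReal_apply hg .univ, map_measureReal_apply hg .univ, preimage_univ]
  gcongr

lemma klDiv_midMeasure_ne_top : klDiv μ (midMeasure μ ν) ≠ ∞ :=
  klDiv_ne_top (absolutelyContinuous_midMeasure μ ν) integrable_llr_midMeasure

theorem jsDiv_map_le (hg : Measurable g) : jsDiv (μ.map g) (ν.map g) ≤ jsDiv μ ν := by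
  rw [jsDiv_eq_klReal_midMeasure, jsDiv_eq_klReal_midMeasure, ← map_midMeasure μ ν hg,
    ← map_midMeasure ν μ hg]
  gcongr
  exacts [klReal_map_le klDiv_midMeasure_ne_top hg, klReal_map_le klDiv_midMeasure_ne_top hg]

theorem jsDist_map_le (hg : Measurable g) : jsDist (μ.map g) (ν.map g) ≤ jsDist μ ν :=
  sqrt_le_sqrt (jsDiv_map_le hg)

end DataProcessing

section Coupling

variable {Ω Ω' : Type*} [MeasurableSpace Ω] [MeasurableSpace Ω']

lemma integral_abs_sub_le_of_forall_setIntegral_le {ρ : Measure Ω} {p q : Ω → ℝ} {ε : ℝ}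
    (hp : Integrable p ρ) (hq : Integrable q ρ) (hpm : Measurable p) (hqm : Measurable q)
    (hε : ∀ s, MeasurableSet s → |∫ x in s, p x ∂ρ - ∫ x in s, q x ∂ρ| ≤ ε) :
    ∫ x, |p x - q x| ∂ρ ≤ 2 * ε := by
  let s := {x | q x ≤ p x}
  have hs : MeasurableSet s := measurableSet_le hqm hpm
  have on_s : ∫ x in s, |p x - q x| ∂ρ = ∫ x in s, p x ∂ρ - ∫ x in s, q x ∂ρ := by
    rw [← integral_sub hp.restrict hq.restrict]
    exact setIntegral_congr_fun hs fun x hx ↦ abs_of_nonneg (sub_nonneg.2 hx)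
  have on_compl : ∫ x in sᶜ, |p x - q x| ∂ρ = -(∫ x in sᶜ, p x ∂ρ - ∫ x in sᶜ, q x ∂ρ) := by
    rw [← integral_sub hp.restrict hq.restrict, ← integral_neg]
    exact setIntegral_congr_fun hs.compl fun x hx ↦
      abs_of_nonpos (sub_nonpos.2 (le_of_not_ge hx))
  have abs_integrable : Integrable (fun x ↦ |p x - q x|) ρ := (hp.sub hq).abs
  rw [← integral_add_compl hs abs_integrable, on_s, on_compl]
  linarith [(le_abs_self _).trans (hε s hs), (neg_le_abs _).trans (hε sᶜ hs.compl)]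

theorem jsDiv_le_of_forall_abs_measureReal_sub_le {μ ν : Measure Ω} [IsFiniteMeasure μ]
    [IsFiniteMeasure ν] {ε : ℝ} (hε : ∀ s, MeasurableSet s → |μ.real s - ν.real s| ≤ ε) :
    jsDiv μ ν ≤ ε := by
  let ρ := μ + ν
  have hμ : μ ≪ ρ := Measure.AbsolutelyContinuous.rfl.add_right ν
  have hν : ν ≪ ρ := Measure.AbsolutelyContinuous.rfl.add_right' μ
  have hμi : Integrable (fun x ↦ (μ.rnDeriv ρ x).toReal) ρ := Measure.integrable_toReal_rnDeriv
  have hνi : Integrable (fun x ↦ (ν.rnDeriv ρ x).toReal) ρ := Measure.integrable_toReal_rnDeriv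
  calc jsDiv μ ν
      ≤ ∫ x, |(μ.rnDeriv ρ x).toReal - (ν.rnDeriv ρ x).toReal| / 2 ∂ρ := by
        rw [jsDiv_eq_integral_jsDensity hμ hν]
        exact integral_mono integrable_jsDensity_rnDeriv ((hμi.sub hνi).abs.div_const 2) fun x ↦
          jsDensity_le_abs_sub_div_two ENNReal.toReal_nonneg ENNReal.toReal_nonneg
    _ = (∫ x, |(μ.rnDeriv ρ x).toReal - (ν.rnDeriv ρ x).toReal| ∂ρ) / 2 := integral_div ..
    _ ≤ 2 * ε / 2 := by
        gcongr
        refine integral_abs_sub_le_of_forall_setIntegral_le hμi hνi (by fun_prop) (by fun_prop)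
          fun s hs ↦ ?_
        rw [Measure.setIntegral_toReal_rnDeriv hμ, Measure.setIntegral_toReal_rnDeriv hν]
        exact hε s hs
    _ = ε := by ring

theorem jsDist_map_map_le_sqrt_measureReal_ne (μ : Measure Ω) [IsFiniteMeasure μ] {f k : Ω → Ω'}
    (hf : Measurable f) (hk : Measurable k) :
    jsDist (μ.map f) (μ.map k) ≤ √(μ.real {x | f x ≠ k x}) := by
  refine sqrt_le_sqrt (jsDiv_le_of_forall_abs_measureReal_sub_le fun s hs ↦ ?_)
  rw [map_measureReal_apply hf hs, map_measureReal_apply hk hs]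
  refine (abs_measureReal_sub_le_measureReal_symmDiff (hf hs).nullMeasurableSet
    (hk hs).nullMeasurableSet).trans (measureReal_mono fun x hx heq ↦ ?_)
  simp [mem_symmDiff, heq] at hx

lemma integral_abs_sub_eq_measureReal_ne (μ : Measure Ω) {f k : Ω → ℝ}
    (hf : Measurable f) (hk : Measurable k) (hf01 : ∀ x, f x = 0 ∨ f x = 1)
    (hk01 : ∀ x, k x = 0 ∨ k x = 1) :
    ∫ x, |f x - k x| ∂μ = μ.real {x | f x ≠ k x} := by
  have hne : MeasurableSet {x | f x ≠ k x} := (measurableSet_eq_fun hf hk).compl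
  rw [← integral_indicator_one hne]
  refine integral_congr_ae (.of_forall fun x ↦ ?_)
  rcases hf01 x with h | h <;> rcases hk01 x with h' | h' <;> simp [indicator, h, h']

end Coupling

theorem stmt_9_general {X Y Z : Type*} [MeasurableSpace X] [MeasurableSpace Y] [MeasurableSpace Z]
    (DS DT : Measure X) [IsFiniteMeasure DS] [IsFiniteMeasure DT] {fS fT : X → Y}
    (hfS : Measurable fS) (hfT : Measurable fT) {g : X → Z} (hg : Measurable g) {h : Z → Y}
    (hh : Measurable h) :
    jsDist (DS.map fS) (DT.map fT) ≤
      jsDist (DS.map g) (DT.map g) + √(DS.real {x | h (g x) ≠ fS x}) +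
        √(DT.real {x | h (g x) ≠ fT x}) := by
  let PS := (DS.map g).map h
  let PT := (DT.map g).map h
  have source : jsDist (DS.map fS) PS ≤ √(DS.real {x | h (g x) ≠ fS x}) := by
    rw [show PS = DS.map (h ∘ g) from Measure.map_map hh hg]
    simpa only [Function.comp_apply, ne_comm] using
      jsDist_map_map_le_sqrt_measureReal_ne DS hfS (hh.comp hg)
  have target : jsDist PT (DT.map fT) ≤ √(DT.real {x | h (g x) ≠ fT x}) := by
    rw [show PT = DT.map (h ∘ g) from Measure.map_map hh hg]
    exact jsDist_map_map_le_sqrt_measureReal_ne DT (hh.comp hg) hfT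
  calc jsDist (DS.map fS) (DT.map fT)
      ≤ jsDist (DS.map fS) PS + (jsDist PS PT + jsDist PT (DT.map fT)) :=
        (jsDist_triangle _ PS _).trans (by gcongr; exact jsDist_triangle _ PT _)
    _ ≤ √(DS.real {x | h (g x) ≠ fS x}) +
          (jsDist (DS.map g) (DT.map g) + √(DT.real {x | h (g x) ≠ fT x})) := by
        gcongr
        exact jsDist_map_le hh
    _ = _ := by ring

theorem stmt_9 {X Z : Type*} [MeasurableSpace X] [MeasurableSpace Z]
    (DS DT : Measure X) [IsProbabilityMeasure DS] [IsProbabilityMeasure DT]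
    (fS fT : X → ℝ) (hfS : Measurable fS) (hfT : Measurable fT)
    (hfSr : ∀ x, fS x = 0 ∨ fS x = 1) (hfTr : ∀ x, fT x = 0 ∨ fT x = 1)
    (g : X → Z) (hg : Measurable g)
    (h : Z → ℝ) (hh : Measurable h) (hhr : ∀ z, h z = 0 ∨ h z = 1) :
    jsDist (Measure.map fS DS) (Measure.map fT DT) ≤
      jsDist (Measure.map g DS) (Measure.map g DT) +
        Real.sqrt (∫ x, |h (g x) - fS x| ∂DS) +
        Real.sqrt (∫ x, |h (g x) - fT x| ∂DT) := by
  have hhg : Measurable fun x ↦ h (g x) := hh.comp hg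
  rw [integral_abs_sub_eq_measureReal_ne DS hhg hfS (fun x ↦ hhr (g x)) hfSr,
    integral_abs_sub_eq_measureReal_ne DT hhg hfT (fun x ↦ hhr (g x)) hfTr]
  exact stmt_9_general DS DT hfS hfT hg hh
end
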